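/- Prime Ideal Theorem: if K is a number field and π_K(x) denotes the number of nonzero prime ideals 𝔭 of the ring of integers O_K with norm N(𝔭) ≤ x, then π_K(x) ∼ Li(x) as x → ∞; that is, π_K(x)/Li(x) tends to 1. -/

import Mathlib

open Filter


namespace PIT

open MeasureTheory Set Topology

/-- The hat function. -/
noncomputable def hat (t : ℝ) : ℝ := max 0 (1 - |t|)

lemma hat_continuous : Continuous hat := by unfold hat; fun_prop

lemma hat_nonneg (t : ℝ) : 0 ≤ hat t := le_max_left _ _

lemma hat_le_one (t : ℝ) : hat t ≤ 1 := by
  unfold hat; exact max_le zero_le_one (by linarith [abs_nonneg t])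

lemma hat_eq_zero {t : ℝ} (h : 1 ≤ |t|) : hat t = 0 := by
  unfold hat; exact max_eq_left (by linarith)

lemma hat_lipschitz (s t : ℝ) : |hat s - hat t| ≤ |s - t| := by
  unfold hat
  have h := abs_max_sub_max_le_abs (1 - |s|) (1 - |t|) 0
  rw [max_comm, max_comm 0 (1 - |t|)]
  refine h.trans ?_
  have : 1 - |s| - (1 - |t|) = |t| - |s| := by ring
  rw [this, abs_sub_comm s t]
  exact abs_abs_sub_abs_le_abs_sub _ _

lemma hat_hasCompactSupport : HasCompactSupport hat := by
  apply HasCompactSupport.of_support_subset_isCompact (isCompact_Icc (a := -1) (b := 1))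
  intro t ht
  by_contra h
  apply ht
  apply hat_eq_zero
  by_contra h2
  push Not at h2
  exact h (abs_le.mp h2.le)

lemma hat_laplace (a : ℂ) (ha : a ≠ 0) :
    ∫ t : ℝ, (hat t : ℂ) * Complex.exp (a * t) =
      (Complex.exp a + Complex.exp (-a) - 2) / a ^ 2 := by
  have hcont : Continuous fun t : ℝ => (hat t : ℂ) * Complex.exp (a * t) := by
    have := hat_continuous
    fun_prop
  have h0 : ∫ t : ℝ, (hat t : ℂ) * Complex.exp (a * t) =
      ∫ t in (-1 : ℝ)..1, (hat t : ℂ) * Complex.exp (a * t) := by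
    rw [intervalIntegral.integral_of_le (by norm_num)]
    symm
    apply setIntegral_eq_integral_of_forall_compl_eq_zero
    intro t ht
    have : hat t = 0 := by
      apply hat_eq_zero
      by_contra h2
      push Not at h2
      have := abs_lt.mp h2
      exact ht ⟨this.1, this.2.le⟩
    simp [this]
  rw [h0, ← intervalIntegral.integral_add_adjacent_intervals (b := 0)
    (hcont.intervalIntegrable _ _) (hcont.intervalIntegrable _ _)]
  have h1 : ∫ t in (-1 : ℝ)..0, (hat t : ℂ) * Complex.exp (a * t) =
      1 / a - 1 / a ^ 2 + Complex.exp (-a) / a ^ 2 := by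
    have : ∫ t in (-1 : ℝ)..0, (hat t : ℂ) * Complex.exp (a * t) =
        ∫ t in (-1 : ℝ)..0, (1 + (t : ℂ)) * Complex.exp (a * t) := by
      apply intervalIntegral.integral_congr
      intro t ht
      rw [uIcc_of_le (by norm_num)] at ht
      have : hat t = 1 + t := by
        unfold hat
        rw [abs_of_nonpos ht.2, max_eq_right] <;> linarith [ht.1]
      simp [this]
    rw [this, intervalIntegral.integral_eq_sub_of_hasDerivAt
      (f := fun t : ℝ => (1 + (t : ℂ)) * Complex.exp (a * t) / a - Complex.exp (a * t) / a ^ 2)]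
    · simp
    · intro t _
      have h1 : HasDerivAt (fun t : ℝ => (t : ℂ)) 1 t := Complex.ofRealCLM.hasDerivAt
      have h2 := (h1.const_mul a).cexp
      convert! (((h1.const_add 1).mul h2).div_const a).sub (h2.div_const (a ^ 2)) using 1
      field_simp
      ring
    · apply Continuous.intervalIntegrable; fun_prop
  have h2 : ∫ t in (0 : ℝ)..1, (hat t : ℂ) * Complex.exp (a * t) =
      - 1 / a - 1 / a ^ 2 + Complex.exp a / a ^ 2 := by
    have : ∫ t in (0 : ℝ)..1, (hat t : ℂ) * Complex.exp (a * t) =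
        ∫ t in (0 : ℝ)..1, (1 - (t : ℂ)) * Complex.exp (a * t) := by
      apply intervalIntegral.integral_congr
      intro t ht
      rw [uIcc_of_le (by norm_num)] at ht
      have : hat t = 1 - t := by
        unfold hat
        rw [abs_of_nonneg ht.1, max_eq_right]; linarith [ht.2]
      simp [this]
    rw [this, intervalIntegral.integral_eq_sub_of_hasDerivAt
      (f := fun t : ℝ => (1 - (t : ℂ)) * Complex.exp (a * t) / a + Complex.exp (a * t) / a ^ 2)]
    · simp
      ring
    · intro t _
      have h1 : HasDerivAt (fun t : ℝ => (t : ℂ)) 1 t := Complex.ofRealCLM.hasDerivAt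
      have h2 := (h1.const_mul a).cexp
      convert! (((h1.const_sub 1).mul h2).div_const a).add (h2.div_const (a ^ 2)) using 1
      field_simp
      ring
    · apply Continuous.intervalIntegrable; fun_prop
  rw [h1, h2]
  ring

/-- The Fejer kernel. -/
noncomputable def fejer (x : ℝ) : ℝ := 2 * (1 - Real.cos x) / x ^ 2

lemma fejer_nonneg (x : ℝ) : 0 ≤ fejer x := by
  unfold fejer
  have := Real.cos_le_one x
  have : 0 ≤ 1 - Real.cos x := by linarith
  positivity

lemma fejer_measurable : Measurable fejer := by unfold fejer; fun_prop

lemma fejer_le (x : ℝ) : fejer x ≤ 8 * (1 + x ^ 2)⁻¹ := by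
  unfold fejer
  by_cases hx : x = 0
  · subst hx; simp
  have hx2 : 0 < x ^ 2 := by positivity
  rw [div_le_iff₀ hx2, ← div_eq_mul_inv, div_mul_eq_mul_div, le_div_iff₀ (by positivity)]
  have h1 := Real.one_sub_sq_div_two_le_cos (x := x)
  have h2 := Real.neg_one_le_cos x
  nlinarith

lemma fejer_integrable : Integrable fejer := by
  refine (integrable_inv_one_add_sq.const_mul 8).mono' fejer_measurable.aestronglyMeasurable ?_
  filter_upwards with x
  rw [Real.norm_of_nonneg (fejer_nonneg x)]
  exact fejer_le x

lemma fejer_integral_pos : 0 < ∫ x, fejer x := by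
  rw [integral_pos_iff_support_of_nonneg fejer_nonneg fejer_integrable]
  have : Ioo (0 : ℝ) 1 ⊆ Function.support fejer := by
    intro x hx
    have h1 := Real.cos_lt_cos_of_nonneg_of_le_pi le_rfl
      (by linarith [Real.pi_gt_three, hx.2] : x ≤ Real.pi) hx.1
    rw [Real.cos_zero] at h1
    have : 0 < fejer x := by
      unfold fejer
      have h2 : 0 < 1 - Real.cos x := by linarith
      have h3 := hx.1
      positivity
    exact this.ne'
  refine lt_of_lt_of_le ?_ (measure_mono this)
  simp

lemma hat_fourier (x : ℝ) (hx : x ≠ 0) :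
    ∫ t : ℝ, (hat t : ℂ) * Complex.exp (t * x * Complex.I) = (fejer x : ℂ) := by
  have h := hat_laplace (x * Complex.I) (by simp [hx])
  have e : (fun t : ℝ => (hat t : ℂ) * Complex.exp (t * x * Complex.I)) =
    fun t : ℝ => (hat t : ℂ) * Complex.exp (x * Complex.I * t) := by
    ext t; congr 2; ring
  rw [e, h]
  have h2 : Complex.exp (x * Complex.I) + Complex.exp (-(x * Complex.I)) = 2 * Complex.cos x := by
    rw [Complex.cos]; ring_nf
  rw [h2]
  unfold fejer
  push_cast
  rw [mul_pow, Complex.I_sq]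
  have : (x : ℂ) ≠ 0 := by exact_mod_cast hx
  field_simp
  ring

lemma hat_fourier_scale (l : ℝ) (hl : 0 < l) (x : ℝ) (hx : x ≠ 0) :
    ∫ t : ℝ, (hat (t / l) : ℂ) * Complex.exp (t * x * Complex.I) = (l * fejer (l * x) : ℂ) := by
  rw [← hat_fourier (l * x) (by positivity)]
  have := Measure.integral_comp_mul_left
    (fun t : ℝ => (hat (t / l) : ℂ) * Complex.exp (t * x * Complex.I)) l
  rw [abs_of_pos (by positivity), eq_inv_smul_iff₀ hl.ne', Complex.real_smul] at this
  rw [← this]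
  congr 2
  ext t
  rw [mul_div_cancel_left₀ _ hl.ne']
  congr 2
  push_cast; ring

end PIT



namespace PIT

open MeasureTheory Set Topology

lemma fourier_identity (f : ℝ → ℝ) (hf : Measurable f) (C : ℝ) (hC : ∀ v, |f v| ≤ C)
    (hf0 : ∀ v ≤ 0, f v = 0) (l : ℝ) (hl : 0 < l) (u ε : ℝ) (hε : 0 < ε) :
    ∫ t : ℝ, (hat (t / l) : ℂ) * Complex.exp (t * u * Complex.I) *
        (∫ v : ℝ, (f v : ℂ) * Complex.exp (-(ε + t * Complex.I) * v)) =
      ∫ v : ℝ, ((f v * Real.exp (-(ε * v)) * (l * fejer (l * (u - v))) : ℝ) : ℂ) := by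
  have hC0 : 0 ≤ C := (abs_nonneg _).trans (hC 0)
  have hfi : Integrable (fun v : ℝ => C * (Ioi (0:ℝ)).indicator (fun v => Real.exp (-(ε * v))) v) := by
    apply Integrable.const_mul
    rw [integrable_indicator_iff measurableSet_Ioi]
    have := exp_neg_integrableOn_Ioi 0 hε
    simpa using this
  have hhat : Integrable (fun t : ℝ => hat (t / l)) := by
    have h : Integrable hat := hat_continuous.integrable_of_hasCompactSupport hat_hasCompactSupport
    have := h.comp_mul_left' (R := l⁻¹) (by positivity)
    simpa [div_eq_inv_mul] using this
  have hswap := integral_integral_swap (μ := (volume : Measure ℝ)) (ν := (volume : Measure ℝ))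
    (f := fun t v : ℝ => (hat (t / l) : ℂ) * Complex.exp (t * u * Complex.I) *
      ((f v : ℂ) * Complex.exp (-(ε + t * Complex.I) * v))) ?_
  · simp_rw [← integral_const_mul]
    rw [hswap]
    apply integral_congr_ae
    have hne : ∀ᵐ v : ℝ, v ≠ u := by
      simp [ae_iff]
    filter_upwards [hne] with v hv
    have h1 : ∀ t : ℝ, (hat (t / l) : ℂ) * Complex.exp (t * u * Complex.I) *
      ((f v : ℂ) * Complex.exp (-(ε + t * Complex.I) * v)) =
      ((f v * Real.exp (-(ε * v)) : ℝ) : ℂ) *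
        ((hat (t / l) : ℂ) * Complex.exp (t * ((u - v : ℝ) : ℂ) * Complex.I)) := by
      intro t
      have : Complex.exp (t * u * Complex.I) * Complex.exp (-(ε + t * Complex.I) * v) =
        Complex.exp (-(ε * v)) * Complex.exp (t * ((u - v : ℝ) : ℂ) * Complex.I) := by
        rw [← Complex.exp_add, ← Complex.exp_add]
        congr 1
        push_cast; ring
      push_cast at this ⊢
      linear_combination (hat (t / l) : ℂ) * f v * this
    simp_rw [h1]
    rw [integral_const_mul, hat_fourier_scale l hl _ (sub_ne_zero.mpr hv.symm)]
    push_cast; ring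
  · have hb : Integrable (fun p : ℝ × ℝ => hat (p.1 / l) *
        (C * (Ioi (0:ℝ)).indicator (fun v => Real.exp (-(ε * v))) p.2)) (volume.prod volume) :=
      hhat.mul_prod hfi
    refine hb.mono' ?_ ?_
    · apply Measurable.aestronglyMeasurable
      have := hat_continuous.measurable
      unfold Function.uncurry
      fun_prop
    · filter_upwards with p
      obtain ⟨t, v⟩ := p
      simp only [Function.uncurry]
      rw [norm_mul, norm_mul, norm_mul, Complex.norm_real, Complex.norm_real, Complex.norm_exp,
        Complex.norm_exp, Real.norm_of_nonneg (hat_nonneg _)]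
      simp only [Complex.mul_re, Complex.mul_im, Complex.ofReal_re, Complex.ofReal_im, Complex.I_re,
        Complex.I_im, Complex.neg_re, Complex.add_re, Complex.neg_im, Complex.add_im]
      simp only [mul_zero, mul_one, zero_mul, sub_zero, add_zero, sub_self, Real.exp_zero]
      apply mul_le_mul_of_nonneg_left _ (hat_nonneg _)
      by_cases hv : v ≤ 0
      · rw [hf0 v hv]; simp [hv]
      · push Not at hv
        rw [indicator_of_mem (by exact hv), neg_mul]
        exact mul_le_mul_of_nonneg_right (hC v) (Real.exp_nonneg _)

lemma fejer_shift_integrable (l : ℝ) (hl : 0 < l) (u : ℝ) :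
    Integrable (fun v : ℝ => l * fejer (l * (u - v))) := by
  apply Integrable.const_mul
  exact (fejer_integrable.comp_mul_left' hl.ne').comp_sub_left u

/-- Fourier step of the Wiener-Ikehara argument. -/
lemma fejer_tendsto (f : ℝ → ℝ) (hf : Measurable f) (C : ℝ) (hC : ∀ v, |f v| ≤ C)
    (hf0 : ∀ v ≤ 0, f v = 0) (H : ℂ → ℂ) (hH : ContinuousOn H {s | 0 ≤ s.re})
    (hHf : ∀ s : ℂ, 0 < s.re → ∫ v : ℝ, (f v : ℂ) * Complex.exp (-s * v) = H s)
    (l : ℝ) (hl : 0 < l) :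
    Tendsto (fun u : ℝ => ∫ v : ℝ, f v * (l * fejer (l * (u - v)))) atTop (𝓝 0) := by
  -- limit as `ε → 0`
  have hC0 : 0 ≤ C := (abs_nonneg _).trans (hC 0)
  have key : ∀ u : ℝ, ((∫ v : ℝ, f v * (l * fejer (l * (u - v))) : ℝ) : ℂ) =
      ∫ t : ℝ, (hat (t / l) : ℂ) * Complex.exp (t * u * Complex.I) * H (t * Complex.I) := by
    intro u
    obtain ⟨ε, hε, hεpos, hεle⟩ : ∃ ε : ℕ → ℝ, Tendsto ε atTop (𝓝 0) ∧ (∀ n, 0 < ε n) ∧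
        (∀ n, ε n ≤ 1) := by
      refine ⟨fun n => (1 : ℝ) / (n + 1), tendsto_one_div_add_atTop_nhds_zero_nat,
        fun n => by positivity, fun n => ?_⟩
      rw [div_le_one (by positivity)]; linarith [(n.cast_nonneg : (0:ℝ) ≤ n)]
    have hL : Tendsto (fun n : ℕ => ∫ v : ℝ,
        ((f v * Real.exp (-(ε n * v)) * (l * fejer (l * (u - v))) : ℝ) : ℂ)) atTop
        (𝓝 (∫ v : ℝ, ((f v * (l * fejer (l * (u - v))) : ℝ) : ℂ))) := by
      refine tendsto_integral_filter_of_dominated_convergence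
        (fun v => C * (l * fejer (l * (u - v)))) ?_ ?_ ?_ ?_
      · filter_upwards with n
        apply Measurable.aestronglyMeasurable
        have := fejer_measurable
        fun_prop
      · filter_upwards with n
        filter_upwards with v
        have h0 : 0 ≤ l * fejer (l * (u - v)) := mul_nonneg hl.le (fejer_nonneg _)
        rw [Complex.norm_real, norm_mul, norm_mul, Real.norm_of_nonneg h0]
        apply mul_le_mul_of_nonneg_right _ h0
        by_cases hv : v ≤ 0
        · rw [hf0 v hv]; simpa using hC0
        · push Not at hv
          calc ‖f v‖ * ‖Real.exp (-(ε n * v))‖ ≤ C * 1 := by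
                apply mul_le_mul (hC v) _ (norm_nonneg _) hC0
                rw [Real.norm_of_nonneg (Real.exp_nonneg _)]
                apply Real.exp_le_one_iff.mpr
                have := hεpos n
                nlinarith [mul_pos this hv]
            _ = C := mul_one _
      · exact (fejer_shift_integrable l hl u).const_mul C
      · filter_upwards with v
        refine (Complex.continuous_ofReal.tendsto _).comp ?_
        have : Tendsto (fun n : ℕ => Real.exp (-(ε n * v))) atTop (𝓝 1) := by
          have := (Real.continuous_exp.tendsto _).comp ((hε.mul_const v).neg)
          simpa [Function.comp_def] using this
        simpa using (this.const_mul (f v)).mul_const (l * fejer (l * (u - v)))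
    have hR : Tendsto (fun n : ℕ => ∫ t : ℝ, (hat (t / l) : ℂ) * Complex.exp (t * u * Complex.I) *
        H (ε n + t * Complex.I)) atTop
        (𝓝 (∫ t : ℝ, (hat (t / l) : ℂ) * Complex.exp (t * u * Complex.I) * H (t * Complex.I))) := by
      obtain ⟨M, hM⟩ : ∃ M, ∀ e ∈ Icc (0:ℝ) 1, ∀ t ∈ Icc (-l) l,
          ‖H ((e : ℂ) + t * Complex.I)‖ ≤ M := by
        have hK : IsCompact ((fun p : ℝ × ℝ => (p.1 : ℂ) + p.2 * Complex.I) ''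
            (Icc (0:ℝ) 1 ×ˢ Icc (-l) l)) :=
          (isCompact_Icc.prod isCompact_Icc).image (by fun_prop)
        obtain ⟨M, hM⟩ := hK.exists_bound_of_continuousOn (f := H) (hH.mono (by
          rintro _ ⟨⟨e, t⟩, ⟨he, -⟩, rfl⟩
          simpa using he.1))
        exact ⟨M, fun e he t ht => hM _ ⟨(e, t), ⟨he, ht⟩, rfl⟩⟩
      have hcont : ∀ e : ℝ, 0 ≤ e → Continuous fun t : ℝ => H ((e : ℂ) + t * Complex.I) := by
        intro e he
        rw [← continuousOn_univ]
        refine hH.comp (by fun_prop) ?_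
        intro t _
        simpa using he
      have hh := hat_continuous
      refine tendsto_integral_filter_of_dominated_convergence
        (fun t => hat (t / l) * M) ?_ ?_ ?_ ?_
      · filter_upwards with n
        apply Continuous.aestronglyMeasurable
        exact ((Complex.continuous_ofReal.comp (hh.comp (continuous_id.div_const l))).mul
          (by fun_prop)).mul (hcont _ (hεpos n).le)
      · filter_upwards with n
        filter_upwards with t
        rw [norm_mul, norm_mul, Complex.norm_real, Real.norm_of_nonneg (hat_nonneg _)]
        rw [Complex.norm_exp]
        have : ((t : ℂ) * u * Complex.I).re = 0 := by simp
        rw [this, Real.exp_zero, mul_one]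
        by_cases ht : t ∈ Icc (-l) l
        · exact mul_le_mul_of_nonneg_left (hM _ ⟨(hεpos n).le, hεle n⟩ t ht) (hat_nonneg _)
        · have : hat (t / l) = 0 := by
            apply hat_eq_zero
            rw [abs_div, abs_of_pos hl, le_div_iff₀ hl, one_mul]
            by_contra h
            push Not at h
            exact ht (abs_le.mp h.le)
          rw [this]; simp
      · have h : Integrable hat := hat_continuous.integrable_of_hasCompactSupport hat_hasCompactSupport
        have := h.comp_mul_left' (R := l⁻¹) (by positivity)
        have h2 : Integrable (fun t : ℝ => hat (t / l)) := by simpa [div_eq_inv_mul] using this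
        exact h2.mul_const M
      · filter_upwards with t
        apply Tendsto.const_mul
        have h1 : ContinuousWithinAt H {s | 0 ≤ s.re} (t * Complex.I) := hH _ (by simp)
        refine h1.tendsto.comp (tendsto_nhdsWithin_iff.mpr ⟨?_, ?_⟩)
        · have := ((Complex.continuous_ofReal.tendsto _).comp hε).add_const (t * Complex.I)
          simpa using this
        · filter_upwards with n
          simpa using (hεpos n).le
    have heq : ∀ n : ℕ, ∫ v : ℝ,
        ((f v * Real.exp (-(ε n * v)) * (l * fejer (l * (u - v))) : ℝ) : ℂ) =
        ∫ t : ℝ, (hat (t / l) : ℂ) * Complex.exp (t * u * Complex.I) *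
        H (ε n + t * Complex.I) := by
      intro n
      rw [← fourier_identity f hf C hC hf0 l hl u _ (hεpos n)]
      congr 1
      ext t
      rw [hHf]
      simpa using hεpos n
    have := tendsto_nhds_unique hL (hR.congr fun n => (heq n).symm)
    rw [← this, integral_complex_ofReal]
  have hRL := Real.tendsto_integral_exp_smul_cocompact
    (fun t : ℝ => (hat (t / l) : ℂ) * H (t * Complex.I))
  have h2 : Tendsto (fun u : ℝ => -u / (2 * Real.pi)) atTop (cocompact ℝ) := by
    refine Tendsto.mono_right ?_ (atBot_le_cocompact)
    exact tendsto_neg_atTop_atBot.atBot_div_const (by positivity)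
  have h3 := hRL.comp h2
  suffices h4 : Tendsto (fun u : ℝ => ((∫ v : ℝ, f v * (l * fejer (l * (u - v))) : ℝ) : ℂ)) atTop
      (𝓝 0) by
    have := (Complex.continuous_re.tendsto _).comp h4
    simpa [Function.comp_def] using this
  refine Tendsto.congr ?_ h3
  intro u
  refine Eq.trans ?_ (key u).symm
  simp only [Function.comp_apply]
  congr 1
  ext t
  rw [Circle.smul_def, Real.fourierChar_apply, smul_eq_mul]
  have : (((2 * Real.pi * -(t * (-u / (2 * Real.pi))) : ℝ) : ℂ) * Complex.I) =
      t * u * Complex.I := by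
    have : (2 * Real.pi * -(t * (-u / (2 * Real.pi))) : ℝ) = t * u := by
      field_simp
    rw [this]; push_cast; ring
  rw [this]
  ring

end PIT



namespace PIT

open MeasureTheory Set Topology

lemma fejer_scale_integral (l : ℝ) (hl : 0 < l) (w : ℝ) :
    ∫ v : ℝ, l * fejer (l * (w - v)) = ∫ x, fejer x := by
  rw [integral_const_mul, integral_sub_left_eq_self (fun v => fejer (l * v)) volume w,
    Measure.integral_comp_mul_left, abs_of_pos (by positivity), smul_eq_mul,
    mul_inv_cancel_left₀ hl.ne']

lemma fejer_window_integral (l : ℝ) (hl : 0 < l) (w η : ℝ) (hη : 0 ≤ η) :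
    ∫ v : ℝ, (Icc (w - η) (w + η)).indicator (fun v => l * fejer (l * (w - v))) v =
      ∫ x in (-(l * η))..(l * η), fejer x := by
  rw [integral_indicator measurableSet_Icc, integral_Icc_eq_integral_Ioc,
    ← intervalIntegral.integral_of_le (by linarith), 
    intervalIntegral.integral_comp_sub_left (fun v => l * fejer (l * v)) w,
    intervalIntegral.integral_const_mul, intervalIntegral.mul_integral_comp_mul_left]
  congr 1 <;> ring

/-- Wiener-Ikehara Tauberian theorem, for bounded functions. -/
theorem tauber (B : ℝ → ℝ) (hBm : Measurable B) (hB0 : ∀ u, 0 ≤ B u) (C : ℝ) (hBC : ∀ u, B u ≤ C)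
    (hmono : ∀ u v, u ≤ v → Real.exp u * B u ≤ Real.exp v * B v)
    (H : ℂ → ℂ) (hH : ContinuousOn H {s | 0 ≤ s.re})
    (hHB : ∀ s : ℂ, 0 < s.re → ∫ v in Ioi (0:ℝ), ((B v - 1 : ℝ) : ℂ) * Complex.exp (-s * v) = H s) :
    Tendsto B atTop (𝓝 1) := by
  set f : ℝ → ℝ := (Ioi (0:ℝ)).indicator (fun v => B v - 1) with hf
  have hC0 : 0 ≤ C := (hB0 0).trans (hBC 0)
  have hfm : Measurable f := (hBm.sub_const 1).indicator measurableSet_Ioi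
  have hfC : ∀ v, |f v| ≤ C + 1 := by
    intro v
    rw [hf, indicator_apply]
    split_ifs
    · rw [abs_le]; constructor <;> linarith [hB0 v, hBC v]
    · simp; linarith
  have hf0 : ∀ v ≤ 0, f v = 0 := fun v hv => by simp [hf, hv]
  have hfH : ∀ s : ℂ, 0 < s.re → ∫ v : ℝ, (f v : ℂ) * Complex.exp (-s * v) = H s := by
    intro s hs
    rw [← hHB s hs, ← integral_indicator measurableSet_Ioi]
    congr 1
    ext v
    simp only [hf, indicator_apply]
    split_ifs <;> simp
  set κ := ∫ x, fejer x with hκ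
  have hκpos : 0 < κ := fejer_integral_pos
  have hlim := fejer_tendsto f hfm (C + 1) hfC hf0 H hH hfH
  -- main estimate
  have main : ∀ η : ℝ, 0 < η → η < 1 → ∀ᶠ u in atTop,
      B u ≤ Real.exp (2 * η) * ((1 + η) / (1 - η)) ∧
      Real.exp (-(2 * η)) * (1 - (2 + C) * η) ≤ B u := by
    intro η hη hη1
    have hwin : Tendsto (fun l : ℝ => ∫ x in (-(l * η))..(l * η), fejer x) atTop (𝓝 κ) := by
      have h1 : Tendsto (fun l : ℝ => l * η) atTop atTop := tendsto_id.atTop_mul_const hη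
      exact intervalIntegral_tendsto_integral fejer_integrable
        (tendsto_neg_atTop_atBot.comp h1) h1
    have hev := hwin.eventually (lt_mem_nhds (show κ * (1 - η) < κ by nlinarith))
    obtain ⟨l, hlw, hl⟩ := (hev.and (eventually_gt_atTop (0:ℝ))).exists
    set a := ∫ x in (-(l * η))..(l * η), fejer x with ha
    have haκ : a ≤ κ := by
      rw [ha, intervalIntegral.integral_of_le (by nlinarith)]
      exact setIntegral_le_integral fejer_integrable (Eventually.of_forall fejer_nonneg)
    have hKi := fejer_shift_integrable l hl
    have hfKi : ∀ w, Integrable (fun v => f v * (l * fejer (l * (w - v)))) := by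
      intro w
      refine (hKi w).bdd_mul (c := C + 1) hfm.aestronglyMeasurable ?_
      filter_upwards with v using hfC v
    have hwi : ∀ w, Integrable ((Icc (w - η) (w + η)).indicator
        (fun v => l * fejer (l * (w - v)))) := fun w => (hKi w).indicator measurableSet_Icc
    have hl0 := hlim l hl
    have hsmall := hl0.eventually (Metric.ball_mem_nhds (0:ℝ) (show 0 < η * κ by positivity))
    have hs1 := (tendsto_atTop_add_const_right atTop η tendsto_id).eventually hsmall
    have hs2 := (tendsto_atTop_add_const_right atTop (-η) tendsto_id).eventually hsmall
    filter_upwards [hs1, hs2, eventually_gt_atTop (2 * η)] with u h1 h2 hu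
    simp only [id] at h1 h2
    rw [dist_zero_right, Real.norm_eq_abs, abs_lt] at h1 h2
    constructor
    · have hle : ∫ v, (Real.exp (-(2 * η)) * B u * (Icc ((u + η) - η) ((u + η) + η)).indicator
          (fun v => l * fejer (l * ((u + η) - v))) v - l * fejer (l * ((u + η) - v))) ≤
          ∫ v : ℝ, f v * (l * fejer (l * ((u + η) - v))) := by
        refine integral_mono (((hwi (u + η)).const_mul _).sub (hKi _)) (hfKi _) ?_
        intro v
        have hK0 : 0 ≤ l * fejer (l * ((u + η) - v)) := mul_nonneg hl.le (fejer_nonneg _)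
        simp only [indicator_apply]
        split_ifs with hv
        · have hv0 : 0 < v := by linarith [hv.1]
          have hfv : f v = B v - 1 := by simp [hf, hv0]
          have hm := hmono u v (by linarith [hv.1])
          have : Real.exp (-(2 * η)) * B u ≤ B v := by
            have e1 : Real.exp v ≤ Real.exp (2 * η) * Real.exp u := by
              rw [← Real.exp_add]; apply Real.exp_le_exp.mpr; linarith [hv.2]
            have e2 : Real.exp u * B u ≤ Real.exp u * (Real.exp (2 * η) * B v) := by
              calc _ ≤ _ := hm
                _ ≤ Real.exp (2 * η) * Real.exp u * B v := mul_le_mul_of_nonneg_right e1 (hB0 v)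
                _ = _ := by ring
            have e3 := le_of_mul_le_mul_left e2 (Real.exp_pos u)
            rw [Real.exp_neg, inv_mul_le_iff₀ (Real.exp_pos _)]
            exact e3
          rw [hfv]
          nlinarith
        · have : -1 ≤ f v := by
            rw [hf, indicator_apply]; split_ifs
            · linarith [hB0 v]
            · norm_num
          nlinarith
      rw [integral_sub ((hwi (u + η)).const_mul _) (hKi _), integral_const_mul,
        fejer_window_integral l hl _ _ hη.le, fejer_scale_integral l hl, ← ha, ← hκ] at hle
      have h3 : Real.exp (-(2 * η)) * B u * (κ * (1 - η)) ≤ κ * (1 + η) := by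
        have : Real.exp (-(2 * η)) * B u * (κ * (1 - η)) ≤ Real.exp (-(2 * η)) * B u * a :=
          mul_le_mul_of_nonneg_left hlw.le (mul_nonneg (Real.exp_nonneg _) (hB0 u))
        linarith
      have h4 : Real.exp (-(2 * η)) * B u ≤ (1 + η) / (1 - η) := by
        rw [le_div_iff₀ (by linarith)]
        have : κ * (Real.exp (-(2 * η)) * B u * (1 - η)) ≤ κ * (1 + η) := by linarith
        exact le_of_mul_le_mul_left this hκpos
      rwa [Real.exp_neg, inv_mul_le_iff₀ (Real.exp_pos _)] at h4
    · have hle : ∫ v : ℝ, f v * (l * fejer (l * ((u + -η) - v))) ≤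
          ∫ v, ((Real.exp (2 * η) * B u - 1 - C) * (Icc ((u + -η) - η) ((u + -η) + η)).indicator
          (fun v => l * fejer (l * ((u + -η) - v))) v + C * (l * fejer (l * ((u + -η) - v)))) := by
        refine integral_mono (hfKi _) (((hwi (u + -η)).const_mul _).add ((hKi _).const_mul _)) ?_
        intro v
        have hK0 : 0 ≤ l * fejer (l * ((u + -η) - v)) := mul_nonneg hl.le (fejer_nonneg _)
        simp only [indicator_apply]
        split_ifs with hv
        · have hv0 : 0 < v := by linarith [hv.1]
          have hfv : f v = B v - 1 := by simp [hf, hv0]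
          have hm := hmono v u (by linarith [hv.2])
          have : B v ≤ Real.exp (2 * η) * B u := by
            have e1 : Real.exp u ≤ Real.exp (2 * η) * Real.exp v := by
              rw [← Real.exp_add]; apply Real.exp_le_exp.mpr; linarith [hv.1]
            have e2 : Real.exp v * B v ≤ Real.exp v * (Real.exp (2 * η) * B u) := by
              calc _ ≤ _ := hm
                _ ≤ Real.exp (2 * η) * Real.exp v * B u := mul_le_mul_of_nonneg_right e1 (hB0 u)
                _ = _ := by ring
            exact le_of_mul_le_mul_left e2 (Real.exp_pos v)
          rw [hfv]
          nlinarith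
        · have : f v ≤ C := by
            rw [hf, indicator_apply]; split_ifs
            · linarith [hBC v]
            · exact hC0
          nlinarith
      rw [integral_add ((hwi (u + -η)).const_mul _) ((hKi _).const_mul _), integral_const_mul,
        integral_const_mul,
        fejer_window_integral l hl _ _ hη.le, fejer_scale_integral l hl, ← ha, ← hκ] at hle
      have h3 : Real.exp (2 * η) * B u * a ≤ Real.exp (2 * η) * B u * κ :=
        mul_le_mul_of_nonneg_left haκ (mul_nonneg (Real.exp_nonneg _) (hB0 u))
      have h4 : κ * (1 - (2 + C) * η) ≤ κ * (Real.exp (2 * η) * B u) := by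
        have : (1 + C) * (κ * (1 - η)) ≤ (1 + C) * a :=
          mul_le_mul_of_nonneg_left hlw.le (by linarith)
        nlinarith
      have h5 := le_of_mul_le_mul_left h4 hκpos
      rw [Real.exp_neg, inv_mul_le_iff₀ (Real.exp_pos _)]
      exact h5
  have hup : Tendsto (fun η : ℝ => Real.exp (2 * η) * ((1 + η) / (1 - η))) (𝓝[>] 0) (𝓝 1) := by
    have : ContinuousAt (fun η : ℝ => Real.exp (2 * η) * ((1 + η) / (1 - η))) 0 := by
      apply ContinuousAt.mul (by fun_prop)
      apply ContinuousAt.div (by fun_prop) (by fun_prop) (by norm_num)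
    have := this.tendsto
    simp only [mul_zero, Real.exp_zero, add_zero, sub_zero, div_one, mul_one] at this
    exact this.mono_left nhdsWithin_le_nhds
  have hlo : Tendsto (fun η : ℝ => Real.exp (-(2 * η)) * (1 - (2 + C) * η)) (𝓝[>] 0) (𝓝 1) := by
    have : Continuous (fun η : ℝ => Real.exp (-(2 * η)) * (1 - (2 + C) * η)) := by fun_prop
    have := this.tendsto 0
    simp only [mul_zero, neg_zero, Real.exp_zero, sub_zero, mul_one] at this
    exact this.mono_left nhdsWithin_le_nhds
  have hIoo : ∀ᶠ η : ℝ in 𝓝[>] 0, 0 < η ∧ η < 1 := by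
    filter_upwards [Ioo_mem_nhdsGT (show (0:ℝ) < 1 by norm_num)] with η hη using hη
  rw [tendsto_order]
  constructor
  · intro b hb
    obtain ⟨η, h1, h2⟩ := ((hlo.eventually (lt_mem_nhds hb)).and hIoo).exists
    filter_upwards [main η h2.1 h2.2] with u hu
    exact h1.trans_le hu.2
  · intro b hb
    obtain ⟨η, h1, h2⟩ := ((hup.eventually (gt_mem_nhds hb)).and hIoo).exists
    filter_upwards [main η h2.1 h2.2] with u hu
    exact hu.1.trans_lt h1

end PIT



namespace PIT

open MeasureTheory Set Topology

noncomputable def khat (s : ℂ) : ℂ := (Complex.exp s + Complex.exp (-s) - 2) / s ^ 2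

lemma khat_ne_zero {s : ℂ} (hs : 0 < s.re) : khat s ≠ 0 := by
  have hs0 : s ≠ 0 := by rintro rfl; simp at hs
  unfold khat
  refine div_ne_zero ?_ (pow_ne_zero _ hs0)
  have h1 : Complex.exp s + Complex.exp (-s) - 2 = Complex.exp (-s) * (Complex.exp s - 1) ^ 2 := by
    have : Complex.exp (-s) * Complex.exp s = 1 := by rw [← Complex.exp_add]; simp
    linear_combination (2 - Complex.exp s) * this
  rw [h1]
  refine mul_ne_zero (Complex.exp_ne_zero _) (pow_ne_zero _ ?_)
  intro h
  have h2 : Complex.exp s = 1 := by linear_combination h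
  have h3 := congrArg norm h2
  rw [Complex.norm_exp, norm_one] at h3
  have := Real.add_one_lt_exp hs.ne'
  linarith

lemma khat_differentiableOn : DifferentiableOn ℂ khat {s | 0 < s.re} := by
  unfold khat
  refine DifferentiableOn.div (by fun_prop) (by fun_prop) ?_
  intro s hs
  apply pow_ne_zero
  rintro rfl
  simp at hs

lemma mellin_hat_log {s : ℂ} (hs : s ≠ 0) :
    mellin (fun x => ((hat (Real.log x) : ℝ) : ℂ)) (-s) = khat s := by
  unfold mellin
  have himg : Real.exp '' univ = Ioi 0 := by rw [image_univ, Real.range_exp]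
  rw [← himg, integral_image_eq_integral_abs_deriv_smul (f' := Real.exp) MeasurableSet.univ
    (fun x _ => (Real.hasDerivAt_exp x).hasDerivWithinAt) Real.exp_injective.injOn]
  have h := hat_laplace (-s) (neg_ne_zero.mpr hs)
  rw [setIntegral_univ]
  unfold khat
  rw [neg_neg, neg_sq, add_comm (Complex.exp (-s))] at h
  rw [← h]
  congr 1
  ext v
  beta_reduce
  rw [Real.log_exp, abs_of_pos (Real.exp_pos v), Complex.real_smul, smul_eq_mul, Complex.ofReal_exp,
    Complex.cpow_def_of_ne_zero (Complex.exp_ne_zero _), ← Complex.ofReal_exp, ← Complex.ofReal_log (Real.exp_pos v).le,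
    Real.log_exp, Complex.ofReal_exp, ← mul_assoc, ← Complex.exp_add, mul_comm]
  congr 2
  ring

lemma hat_log_bigO_top (b : ℝ) : (fun x => ((hat (Real.log x) : ℝ) : ℂ)) =O[atTop] (fun x : ℝ => x ^ b) := by
  have : (fun x => ((hat (Real.log x) : ℝ) : ℂ)) =ᶠ[atTop] fun _ => 0 := by
    filter_upwards [eventually_ge_atTop (Real.exp 1)] with x hx
    have : 1 ≤ Real.log x := by
      rw [Real.le_log_iff_exp_le ((Real.exp_pos 1).trans_le hx)]; exact hx
    rw [hat_eq_zero (this.trans (le_abs_self _))]; simp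
  exact this.trans_isBigO (Asymptotics.isBigO_zero _ _)

lemma hat_log_bigO_zero (b : ℝ) :
    (fun x => ((hat (Real.log x) : ℝ) : ℂ)) =O[𝓝[>] 0] (fun x : ℝ => x ^ b) := by
  have : (fun x => ((hat (Real.log x) : ℝ) : ℂ)) =ᶠ[𝓝[>] 0] fun _ => 0 := by
    filter_upwards [Ioo_mem_nhdsGT (Real.exp_pos (-1))] with x hx
    have : Real.log x ≤ -1 := by
      rw [Real.log_le_iff_le_exp hx.1]; exact hx.2.le
    rw [hat_eq_zero (by rw [abs_of_nonpos] <;> linarith)]; simp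
  exact this.trans_isBigO (Asymptotics.isBigO_zero _ _)

lemma continuousOn_hat_log : ContinuousOn (fun x => ((hat (Real.log x) : ℝ) : ℂ)) (Ioi 0) := by
  refine Complex.continuous_ofReal.comp_continuousOn (hat_continuous.comp_continuousOn ?_)
  exact Real.continuousOn_log.mono (fun x hx => (ne_of_gt hx))

lemma mellinConvergent_hat_log (s : ℂ) :
    MellinConvergent (fun x => ((hat (Real.log x) : ℝ) : ℂ)) s :=
  mellinConvergent_of_isBigO_rpow (a := s.re + 1) (b := s.re - 1)
    (continuousOn_hat_log.locallyIntegrableOn measurableSet_Ioi)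
    (hat_log_bigO_top _) (by linarith) (hat_log_bigO_zero _) (by linarith)

lemma mellin_hat_log_div {s : ℂ} (hs : s ≠ 0) {a : ℝ} (ha : 0 < a) :
    MellinConvergent (fun x => ((hat (Real.log (a⁻¹ * x)) : ℝ) : ℂ)) (-s) ∧
    mellin (fun x => ((hat (Real.log (a⁻¹ * x)) : ℝ) : ℂ)) (-s) = (a : ℂ) ^ (-s) * khat s := by
  constructor
  · exact (MellinConvergent.comp_mul_left (f := fun x => ((hat (Real.log x) : ℝ) : ℂ))
      (inv_pos.mpr ha)).mpr (mellinConvergent_hat_log _)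
  · rw [mellin_comp_mul_left (fun x => ((hat (Real.log x) : ℝ) : ℂ)) (-s) (inv_pos.mpr ha),
      mellin_hat_log hs, smul_eq_mul, neg_neg, Complex.ofReal_inv, Complex.inv_cpow, Complex.cpow_neg]
    rw [Complex.arg_ofReal_of_nonneg ha.le]
    exact Real.pi_pos.ne

/-- The smoothed counting function. -/
noncomputable def smoothA {ι : Type*} (N : ι → ℝ) (x : ℝ) : ℝ := ∑' i, hat (Real.log ((N i)⁻¹ * x))

section
variable {ι : Type*} {N : ι → ℝ}

lemma hat_log_le_bound (hN : ∀ i, 1 ≤ N i) {M : ℝ} (i : ι) {x : ℝ} (hx : x ∈ Ioo 0 M) :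
    ‖hat (Real.log ((N i)⁻¹ * x))‖ ≤ (Real.exp 1 * M) ^ (2:ℝ) * N i ^ (-(2:ℝ)) := by
  have hNi : 0 < N i := zero_lt_one.trans_le (hN i)
  have hM : 0 < M := hx.1.trans hx.2
  rw [Real.norm_eq_abs, abs_of_nonneg (hat_nonneg _)]
  by_cases h : 1 ≤ |Real.log ((N i)⁻¹ * x)|
  · rw [hat_eq_zero h]; positivity
  · push Not at h
    have h1 := (abs_lt.mp h).1
    have hpos : 0 < (N i)⁻¹ * x := mul_pos (inv_pos.mpr hNi) hx.1
    rw [Real.lt_log_iff_exp_lt hpos, Real.exp_neg] at h1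
    have h2 : N i < Real.exp 1 * x := by
      have := mul_lt_mul_of_pos_left h1 (mul_pos (Real.exp_pos 1) hNi)
      field_simp at this
      linarith
    have h3 : N i ≤ Real.exp 1 * M := h2.le.trans (by have := hx.2; gcongr)
    refine (hat_le_one _).trans ?_
    rw [Real.rpow_neg hNi.le, ← div_eq_mul_inv, one_le_div (by positivity)]
    exact Real.rpow_le_rpow hNi.le h3 (by norm_num)

lemma smoothA_continuousOn
    (hN : ∀ i, 1 ≤ N i) (hsum : ∀ σ : ℝ, 1 < σ → Summable fun i => N i ^ (-σ)) : ContinuousOn (smoothA N) (Ioi 0) := by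
  intro x hx
  have h : ContinuousOn (smoothA N) (Ioo 0 (x + 1)) := by
    refine continuousOn_tsum (u := fun i => (Real.exp 1 * (x + 1)) ^ (2:ℝ) * N i ^ (-(2:ℝ))) ?_
      ((hsum 2 (by norm_num)).mul_left _) (fun i y hy => hat_log_le_bound hN i hy)
    intro i
    have hNi : 0 < N i := zero_lt_one.trans_le (hN i)
    refine hat_continuous.comp_continuousOn ?_
    refine ContinuousOn.log (by fun_prop) fun y hy => ?_
    exact (mul_pos (inv_pos.mpr hNi) hy.1).ne'
  exact (h.continuousAt (Ioo_mem_nhds hx (by linarith))).continuousWithinAt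

lemma smoothA_eq_zero (hN : ∀ i, 1 ≤ N i) {x : ℝ} (h0 : 0 < x) (hx : x ≤ Real.exp (-1)) : smoothA N x = 0 := by
  unfold smoothA
  rw [← tsum_zero]
  congr 1
  ext i
  have hNi : 0 < N i := zero_lt_one.trans_le (hN i)
  apply hat_eq_zero
  have : Real.log ((N i)⁻¹ * x) ≤ -1 := by
    rw [Real.log_le_iff_le_exp (mul_pos (inv_pos.mpr hNi) h0)]
    refine le_trans ?_ hx
    rw [inv_mul_le_iff₀ hNi]
    nlinarith [hN i]
  rw [abs_of_nonpos] <;> linarith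

lemma smoothA_mellin
    (hN : ∀ i, 1 ≤ N i) (hsum : ∀ σ : ℝ, 1 < σ → Summable fun i => N i ^ (-σ)) [Countable ι] {s : ℂ} (hs : 1 < s.re) :
    mellin (fun x => (smoothA N x : ℂ)) (-s) = (∑' i, (N i : ℂ) ^ (-s)) * khat s := by
  have hs0 : s ≠ 0 := by rintro rfl; simp at hs; linarith
  have hσ0 : ((s.re : ℝ) : ℂ) ≠ 0 := by exact_mod_cast (by linarith : s.re ≠ 0)
  have hNp : ∀ i, 0 < N i := fun i => zero_lt_one.trans_le (hN i)
  have key := hasSum_integral_of_summable_integral_norm (μ := volume.restrict (Ioi (0:ℝ)))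
    (F := fun i (x : ℝ) => (x : ℂ) ^ (-s - 1) • ((hat (Real.log ((N i)⁻¹ * x)) : ℝ) : ℂ))
    (fun i => (mellin_hat_log_div hs0 (hNp i)).1) ?_
  · have h2 := key.tsum_eq
    unfold mellin
    rw [← tsum_mul_right]
    rw [← tsum_congr (fun i => (mellin_hat_log_div hs0 (hNp i)).2)]
    unfold mellin
    rw [h2]
    congr 1
    ext x
    unfold smoothA
    beta_reduce
    rw [Complex.ofReal_tsum, smul_eq_mul, ← tsum_mul_left]
    simp only [smul_eq_mul]
  · have h3 : ∀ i, ∫ a : ℝ in Ioi 0, ‖(a : ℂ) ^ (-s - 1) • ((hat (Real.log ((N i)⁻¹ * a)) : ℝ) : ℂ)‖ =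
        N i ^ (-s.re) * ‖khat s.re‖ := by
      intro i
      have h4 := congrArg norm (mellin_hat_log_div hσ0 (hNp i)).2
      rw [norm_mul, Complex.norm_cpow_eq_rpow_re_of_pos (hNp i), Complex.neg_re, Complex.ofReal_re] at h4
      rw [← h4]
      unfold mellin
      have h5 : ∫ t : ℝ in Ioi 0, (t : ℂ) ^ (-(s.re : ℂ) - 1) • ((hat (Real.log ((N i)⁻¹ * t)) : ℝ) : ℂ) =
          ((∫ a : ℝ in Ioi 0, ‖(a : ℂ) ^ (-s - 1) • ((hat (Real.log ((N i)⁻¹ * a)) : ℝ) : ℂ)‖ : ℝ) : ℂ) := by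
        rw [← integral_complex_ofReal]
        refine setIntegral_congr_fun measurableSet_Ioi fun t ht => ?_
        have ht' : 0 < t := ht
        simp only [smul_eq_mul, norm_mul]
        rw [Complex.norm_cpow_eq_rpow_re_of_pos ht', Complex.norm_real, Real.norm_eq_abs,
          abs_of_nonneg (hat_nonneg _), Complex.ofReal_mul, Complex.ofReal_cpow ht'.le]
        simp
      rw [h5, Complex.norm_real, Real.norm_eq_abs, abs_of_nonneg]
      exact integral_nonneg fun _ => norm_nonneg _
    simp_rw [h3]
    exact (hsum _ hs).mul_right _

lemma continuation_aux
    (hN : ∀ i, 1 ≤ N i) (hsum : ∀ σ : ℝ, 1 < σ → Summable fun i => N i ^ (-σ)) [Countable ι] (c δ C : ℝ) (hδ : 0 ≤ δ) (hδ1 : δ < 1)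
    (hA : ∀ x, 1 ≤ x → |smoothA N x - c * x| ≤ C * x ^ δ) :
    ∃ R : ℂ → ℂ, DifferentiableOn ℂ R {s | δ < s.re} ∧
      ∀ s : ℂ, 1 < s.re → (∑' i, (N i : ℂ) ^ (-s)) * khat s = R s + c / (s - 1) := by
  set m : ℝ → ℂ := (Ioi (1:ℝ)).indicator (fun x => (c : ℂ) * x) with hm
  set r : ℝ → ℂ := fun x => (smoothA N x : ℂ) - m x with hr
  have hAloc : LocallyIntegrableOn (fun x => (smoothA N x : ℂ)) (Ioi 0) :=
    (Complex.continuous_ofReal.comp_continuousOn (smoothA_continuousOn hN hsum)).locallyIntegrableOn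
      measurableSet_Ioi
  have hmloc : LocallyIntegrableOn m (Ioi 0) := by
    have : LocallyIntegrable (fun x : ℝ => (c : ℂ) * x) :=
      Continuous.locallyIntegrable (by fun_prop)
    exact (this.indicator measurableSet_Ioi).locallyIntegrableOn _
  have hrloc : LocallyIntegrableOn r (Ioi 0) := hAloc.sub hmloc
  have hrtop : r =O[atTop] fun x : ℝ => x ^ (-(-δ)) := by
    refine Asymptotics.IsBigO.of_bound C ?_
    filter_upwards [eventually_gt_atTop 1] with x hx
    have := hA x hx.le
    rw [neg_neg, hr]
    simp only [hm, indicator_apply, mem_Ioi, hx, if_true]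
    rw [← Complex.ofReal_mul, ← Complex.ofReal_sub, Complex.norm_real, Real.norm_eq_abs,
      Real.norm_eq_abs, abs_of_nonneg (Real.rpow_nonneg (by linarith : 0 ≤ x) δ)]
    exact this
  have hrzero : ∀ b : ℝ, r =O[𝓝[>] 0] fun x : ℝ => x ^ (-b) := by
    intro b
    have : r =ᶠ[𝓝[>] 0] fun _ => 0 := by
      filter_upwards [Ioo_mem_nhdsGT (Real.exp_pos (-1))] with x hx
      have h1 : ¬ (1 < x) := by
        have : Real.exp (-1) < 1 := by rw [Real.exp_lt_one_iff]; norm_num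
        linarith [hx.2]
      simp [hr, hm, smoothA_eq_zero hN hx.1 hx.2.le, indicator_apply, h1]
    exact this.trans_isBigO (Asymptotics.isBigO_zero _ _)
  refine ⟨fun s => mellin r (-s), ?_, ?_⟩
  · intro s hs
    have hs' : δ < s.re := hs
    have := mellin_differentiableAt_of_isBigO_rpow (s := -s) hrloc hrtop (by simpa using hs')
      (hrzero (-s.re - 1)) (by simp)
    exact (this.comp s differentiable_neg.differentiableAt).differentiableWithinAt
  · intro s hs
    have hrc : MellinConvergent r (-s) :=
      mellinConvergent_of_isBigO_rpow hrloc hrtop (by simpa using (by linarith : δ < s.re))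
      (hrzero (-s.re - 1)) (by simp)
    have hmi : ∀ t ∈ Ioi (0:ℝ), (t : ℂ) ^ (-s - 1) • m t = (Ioi (1:ℝ)).indicator (fun t : ℝ => (c:ℂ) * (t : ℂ) ^ (-s)) t := by
      intro t ht
      have ht' : (t : ℂ) ≠ 0 := by exact_mod_cast (ne_of_gt ht)
      simp only [hm, indicator_apply, smul_eq_mul]
      split_ifs
      · rw [Complex.cpow_sub _ _ ht', Complex.cpow_one]
        field_simp
      · simp
    have hsub : Ioi (1:ℝ) ⊆ Ioi 0 := Ioi_subset_Ioi zero_le_one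
    have hmc : MellinConvergent m (-s) := by
      unfold MellinConvergent
      rw [integrableOn_congr_fun hmi measurableSet_Ioi]
      unfold IntegrableOn
      rw [integrable_indicator_iff measurableSet_Ioi]
      unfold IntegrableOn
      rw [Measure.restrict_restrict measurableSet_Ioi, inter_eq_left.mpr hsub]
      exact (integrableOn_Ioi_cpow_of_lt (by simpa using hs) zero_lt_one).const_mul _
    have hmv : mellin m (-s) = c / (s - 1) := by
      unfold mellin
      rw [setIntegral_congr_fun measurableSet_Ioi hmi, setIntegral_indicator measurableSet_Ioi,
        inter_eq_right.mpr hsub, integral_const_mul, integral_Ioi_cpow_of_lt (by simpa using hs) zero_lt_one]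
      have : s - 1 ≠ 0 := by
        intro h
        have := congrArg Complex.re h
        simp at this; linarith
      have h2 : -s + 1 ≠ 0 := by
        intro h; apply this; linear_combination -h
      simp
      field_simp
      ring
    rw [← smoothA_mellin hN hsum hs, ← hmv]
    unfold mellin
    rw [← integral_add hrc hmc]
    congr 1
    ext t
    simp [hr]
    ring

/-- Analytic continuation of the zeta function beyond the line `Re s = 1`. -/
theorem continuation
    (hN : ∀ i, 1 ≤ N i) (hsum : ∀ σ : ℝ, 1 < σ → Summable fun i => N i ^ (-σ)) [Countable ι] (c δ C : ℝ) (hc : 0 < c) (hδ : 0 ≤ δ) (hδ1 : δ < 1)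
    (hA : ∀ x, 1 ≤ x → |smoothA N x - c * x| ≤ C * x ^ δ) :
    ∃ W : ℂ → ℂ, DifferentiableOn ℂ W {s | δ < s.re} ∧ W 1 ≠ 0 ∧
      ∀ s : ℂ, 1 < s.re → W s = (s - 1) * ∑' i, (N i : ℂ) ^ (-s) := by
  obtain ⟨R, hR, hRs⟩ := continuation_aux hN hsum c δ C hδ hδ1 hA
  refine ⟨fun s => ((s - 1) * R s + c) / khat s, ?_, ?_, ?_⟩
  · refine DifferentiableOn.div ?_ (khat_differentiableOn.mono fun s hs => lt_of_le_of_lt hδ hs)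
      fun s hs => khat_ne_zero (lt_of_le_of_lt hδ hs)
    exact ((differentiableOn_id.sub_const 1).mul hR).add_const _
  · simp only [sub_self, zero_mul, zero_add]
    exact div_ne_zero (by exact_mod_cast hc.ne') (khat_ne_zero (by simp))
  · intro s hs
    have hk := khat_ne_zero (s := s) (by linarith)
    have : s - 1 ≠ 0 := by
      intro h
      have := congrArg Complex.re h
      simp at this; linarith
    simp only
    rw [div_eq_iff hk, mul_assoc, hRs s hs]
    field_simp

end

end PIT



namespace PIT

open MeasureTheory Set Topology

lemma lattice_finite {E : Type*} [NormedAddCommGroup E] [NormedSpace ℝ E] [FiniteDimensional ℝ E]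
    (Λ : Submodule ℤ E) [DiscreteTopology Λ] (r : ℝ) : {l : Λ | ‖(l : E)‖ ≤ r}.Finite := by
  have : ProperSpace E := FiniteDimensional.proper ℝ E
  have hcl : IsClosed (Λ : Set E) := by
    have : DiscreteTopology Λ.toAddSubgroup := inferInstanceAs (DiscreteTopology Λ)
    exact AddSubgroup.isClosed_of_discrete (H := Λ.toAddSubgroup)
  have h := Metric.finite_isBounded_inter_isClosed (K := Metric.closedBall (0:E) r) (s := (Λ : Set E))
    ⟨inferInstanceAs (DiscreteTopology Λ)⟩ Metric.isBounded_closedBall hcl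
  refine Set.Finite.of_finite_image (f := ((↑) : Λ → E)) (h.subset ?_) Subtype.val_injective.injOn
  rintro _ ⟨l, hl, rfl⟩
  exact ⟨by simpa using hl, l.2⟩

theorem lattice_sum {E : Type*} [NormedAddCommGroup E] [NormedSpace ℝ E] [FiniteDimensional ℝ E]
    [MeasurableSpace E] [BorelSpace E] (μ : Measure E) [μ.IsAddHaarMeasure]
    (Λ : Submodule ℤ E) [DiscreteTopology Λ] [IsZLattice ℝ Λ] (f : E → ℝ) (L T : ℝ)
    (hT : 0 ≤ T) (hf : ∀ x y, |f x - f y| ≤ L * ‖x - y‖) (hfT : ∀ x, T < ‖x‖ → f x = 0) :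
    ∃ C, ∀ R : ℝ, 1 ≤ R → |∑' l : Λ, f (R⁻¹ • (l : E)) -
      R ^ Module.finrank ℝ E * ((∫ x, f x ∂μ) / ZLattice.covolume Λ μ)| ≤
      C * (R ^ Module.finrank ℝ E / R) := by
  have : ProperSpace E := FiniteDimensional.proper ℝ E
  have : Module.Finite ℤ Λ := ZLattice.module_finite ℝ Λ
  have : Module.Free ℤ Λ := ZLattice.module_free ℝ Λ
  set b := Module.Free.chooseBasis ℤ Λ
  set D := ZSpan.fundamentalDomain (Module.Basis.ofZLatticeBasis ℝ Λ b) with hDdef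
  have hD : IsAddFundamentalDomain Λ D μ := ZLattice.isAddFundamentalDomain b μ
  have hV : ZLattice.covolume Λ μ = μ.real D := ZLattice.covolume_eq_measure_fundamentalDomain Λ μ hD
  have hVpos : 0 < μ.real D := hV ▸ ZLattice.covolume_pos Λ μ
  rw [hV]
  obtain ⟨d₀, hd₀⟩ := (ZSpan.fundamentalDomain_isBounded (Module.Basis.ofZLatticeBasis ℝ Λ b)).exists_norm_le
  set d := max d₀ 0
  have hd : ∀ x ∈ D, ‖x‖ ≤ d := fun x hx => (hd₀ x hx).trans (le_max_left _ _)
  have hd0 : 0 ≤ d := le_max_right _ _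
  have hDm : MeasurableSet D := ZSpan.fundamentalDomain_measurableSet _
  have hDfin : μ D ≠ ⊤ := (ZSpan.fundamentalDomain_isBounded _).measure_lt_top.ne
  have hDfin' : IsFiniteMeasure (μ.restrict D) := ⟨by simpa using hDfin.lt_top⟩
  have hLd : 0 ≤ |L| * d := by positivity
  have hfc : Continuous f := by
    have : LipschitzWith (Real.toNNReal |L|) f := by
      refine LipschitzWith.of_dist_le_mul fun x y => ?_
      rw [Real.dist_eq, dist_eq_norm, Real.coe_toNNReal _ (abs_nonneg L)]
      exact (hf x y).trans (by gcongr; exact le_abs_self L)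
    exact this.continuous
  have hcs : HasCompactSupport f := by
    apply HasCompactSupport.of_support_subset_isCompact (isCompact_closedBall (0:E) T)
    intro x hx
    by_contra h
    exact hx (hfT x (by simpa using h))
  set n := Module.finrank ℝ E
  set v := μ.real (Metric.ball (0:E) 1)
  refine ⟨|L| * d * ((T + d) ^ n * v) / μ.real D, fun R hR => ?_⟩
  have hR0 : 0 < R := by linarith
  set F : E → ℝ := fun x => f (R⁻¹ • x) with hF
  have hFc : Continuous F := hfc.comp (continuous_const_smul _)
  have hFT : ∀ x, R * T < ‖x‖ → F x = 0 := by
    intro x hx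
    apply hfT
    rw [norm_smul, norm_inv, Real.norm_of_nonneg hR0.le, lt_inv_mul_iff₀ hR0]
    exact hx
  have hFi : Integrable F μ := by
    refine hFc.integrable_of_hasCompactSupport ?_
    apply HasCompactSupport.of_support_subset_isCompact (isCompact_closedBall (0:E) (R * T))
    intro x hx
    by_contra h
    exact hx (hFT x (by simpa using h))
  have hFint : ∫ x, F x ∂μ = R ^ n * ∫ x, f x ∂μ := by
    rw [hF, Measure.integral_comp_inv_smul, abs_of_nonneg (by positivity), smul_eq_mul]
  set S : Finset Λ := (lattice_finite Λ (R * T + 2 * d)).toFinset with hS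
  have hSn : ∀ l : Λ, l ∉ S → R * T + 2 * d < ‖(l : E)‖ := by
    intro l hl
    by_contra h
    exact hl (by simpa [hS] using h)
  have hfar : ∀ l : Λ, l ∉ S → ∀ x ∈ D, R * T + d < ‖(l : E) + x‖ := by
    intro l hl x hx
    have h1 := hSn l hl
    have h2 := norm_sub_le ((l:E) + x) x
    rw [add_sub_cancel_right] at h2
    linarith [hd x hx]
  set h : E → ℝ := (Metric.closedBall (0:E) (R * T + d)).indicator (fun _ => |L| * d / R) with hh
  have hh0 : ∀ x, 0 ≤ h x := fun x => indicator_nonneg (fun _ _ => by positivity) x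
  have hhi : Integrable h μ := by
    rw [hh, integrable_indicator_iff measurableSet_closedBall]
    exact integrableOn_const (measure_closedBall_lt_top.ne)
  have hhI : ∫ x, h x ∂μ = (R * T + d) ^ n * v * (|L| * d / R) := by
    rw [hh, integral_indicator measurableSet_closedBall, setIntegral_const, smul_eq_mul]
    congr 1
    rw [measureReal_def, Measure.addHaar_closedBall μ _ (by positivity), ENNReal.toReal_mul,
      ENNReal.toReal_ofReal (by positivity)]
    rfl
  have hinv : VAddInvariantMeasure Λ E μ :=
    ⟨fun c s _ => by
      have := measure_preimage_add μ (c : E) s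
      simpa [Submodule.vadd_def, vadd_eq_add] using this⟩
  have e1 := hD.integral_eq_tsum'' F hFi
  have e2 := hD.integral_eq_tsum'' h hhi
  simp only [Submodule.vadd_def, vadd_eq_add] at e1 e2
  rw [tsum_eq_sum (s := S)] at e1 e2
  rotate_left
  · intro l hl
    apply setIntegral_eq_zero_of_forall_eq_zero
    intro x hx
    have := hfar l hl x hx
    simp [hh, this]
  · intro l hl
    apply setIntegral_eq_zero_of_forall_eq_zero
    intro x hx
    have := hfar l hl x hx
    exact hFT _ (by linarith)
  have e3 : ∑' l : Λ, f (R⁻¹ • (l : E)) = ∑ l ∈ S, F l := by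
    apply tsum_eq_sum
    intro l hl
    exact hFT _ (by linarith [hSn l hl])
  have e4 : μ.real D * ∑ l ∈ S, F l = ∑ l ∈ S, ∫ x in D, F l ∂μ := by
    rw [Finset.mul_sum]
    refine Finset.sum_congr rfl fun l _ => ?_
    rw [setIntegral_const, smul_eq_mul]
  have hFl : ∀ l : Λ, IntegrableOn (fun x => F ((l : E) + x)) D μ := fun l =>
    (hFi.comp_add_left (l : E)).integrableOn
  have hhl : ∀ l : Λ, IntegrableOn (fun x => h ((l : E) + x)) D μ := fun l =>
    (hhi.comp_add_left (l : E)).integrableOn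
  have e5 : |μ.real D * ∑ l ∈ S, F l - ∫ x, F x ∂μ| ≤ ∫ x, h x ∂μ := by
    rw [e1, e2, e4, ← Finset.sum_sub_distrib]
    refine (Finset.abs_sum_le_sum_abs _ _).trans (Finset.sum_le_sum fun l _ => ?_)
    rw [← integral_sub (integrable_const _) (hFl l)]
    refine (abs_integral_le_integral_abs).trans ?_
    refine setIntegral_mono_on ((integrable_const _).sub (hFl l)).abs (hhl l) hDm fun x hx => ?_
    by_cases hx2 : ‖(l : E) + x‖ ≤ R * T + d
    · have : h ((l : E) + x) = |L| * d / R := by simp [hh, hx2]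
      rw [this]
      refine (hf _ _).trans ?_
      rw [← smul_sub, sub_add_cancel_left, norm_smul, norm_inv, norm_neg, Real.norm_of_nonneg hR0.le]
      calc L * (R⁻¹ * ‖x‖) ≤ |L| * (R⁻¹ * d) := by
            gcongr
            · exact le_abs_self L
            · exact hd x hx
        _ = _ := by field_simp
    · push Not at hx2
      have h2 : R * T < ‖(l : E)‖ := by
        have := norm_add_le (l : E) x
        linarith [hd x hx]
      rw [hFT _ h2, hFT _ (by linarith)]
      simpa using hh0 _
  rw [hhI, hFint] at e5
  rw [e3]
  have e6 : ∑ l ∈ S, F l - R ^ n * ((∫ x, f x ∂μ) / μ.real D) =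
      (μ.real D * ∑ l ∈ S, F l - R ^ n * ∫ x, f x ∂μ) / μ.real D := by
    field_simp
  rw [e6, abs_div, abs_of_pos hVpos, div_mul_eq_mul_div]
  refine div_le_div_of_nonneg_right (e5.trans ?_) hVpos.le
  have hv : 0 ≤ v := measureReal_nonneg
  have e7 : (R * T + d) ^ n ≤ R ^ n * (T + d) ^ n := by
    rw [← mul_pow]
    gcongr
    nlinarith
  calc (R * T + d) ^ n * v * (|L| * d / R) ≤ (R ^ n * (T + d) ^ n) * v * (|L| * d / R) := by gcongr
    _ = _ := by ring

end PIT



namespace PIT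

open MeasureTheory Set Topology

lemma abs_prod_sub_prod_le {κ : Type*} (s : Finset κ) (a b : κ → ℝ) (ha0 : ∀ i, 0 ≤ a i) (ha1 : ∀ i, a i ≤ 1)
    (hb0 : ∀ i, 0 ≤ b i) (hb1 : ∀ i, b i ≤ 1) :
    |∏ i ∈ s, a i - ∏ i ∈ s, b i| ≤ ∑ i ∈ s, |a i - b i| := by
  classical
  induction s using Finset.induction_on with
  | empty => simp
  | insert i s hi ih =>
    rw [Finset.prod_insert hi, Finset.prod_insert hi, Finset.sum_insert hi]
    have h1 : a i * ∏ j ∈ s, a j - b i * ∏ j ∈ s, b j =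
        (a i - b i) * ∏ j ∈ s, a j + b i * (∏ j ∈ s, a j - ∏ j ∈ s, b j) := by ring
    have hp : |∏ j ∈ s, a j| ≤ 1 := by
      rw [abs_of_nonneg (Finset.prod_nonneg fun j _ => ha0 j)]
      exact Finset.prod_le_one (fun j _ => ha0 j) fun j _ => ha1 j
    have hb : |b i| ≤ 1 := by rw [abs_of_nonneg (hb0 i)]; exact hb1 i
    rw [h1]
    refine (abs_add_le _ _).trans (add_le_add ?_ ?_)
    · rw [abs_mul]; exact mul_le_of_le_one_right (abs_nonneg _) hp
    · rw [abs_mul]; exact (mul_le_of_le_one_left (abs_nonneg _) hb).trans ih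

lemma hat_prod_lipschitz {V κ : Type*} [NormedAddCommGroup V] [NormedSpace ℝ V] [FiniteDimensional ℝ V]
    [Fintype κ] (ℓ : V →ₗ[ℝ] (κ → ℝ)) (hℓ : Function.Injective ℓ) :
    ∃ L T : ℝ, 0 ≤ L ∧ 0 ≤ T ∧ (∀ y y', |∏ k, hat (ℓ y k) - ∏ k, hat (ℓ y' k)| ≤ L * ‖y - y'‖) ∧
      (∀ y, ∏ k, hat (ℓ y k) ≠ 0 → ‖y‖ ≤ T) := by
  obtain ⟨A, hA0, hA⟩ := LinearMap.exists_antilipschitzWith ℓ (LinearMap.ker_eq_bot.mpr hℓ)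
  set ℓc := LinearMap.toContinuousLinearMap ℓ
  refine ⟨Fintype.card κ * ‖ℓc‖, A, by positivity, by positivity, ?_, ?_⟩
  · intro y y'
    refine (abs_prod_sub_prod_le _ _ _ (fun _ => hat_nonneg _) (fun _ => hat_le_one _)
      (fun _ => hat_nonneg _) (fun _ => hat_le_one _)).trans ?_
    calc ∑ i, |hat (ℓ y i) - hat (ℓ y' i)| ≤ ∑ i : κ, ‖ℓc‖ * ‖y - y'‖ := by
          refine Finset.sum_le_sum fun i _ => (hat_lipschitz _ _).trans ?_
          have h1 := ℓc.le_opNorm (y - y')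
          have h2 := norm_le_pi_norm (ℓc (y - y')) i
          have h3 : ℓc (y - y') i = ℓ y i - ℓ y' i := by simp [ℓc]
          rw [h3, Real.norm_eq_abs] at h2
          exact h2.trans h1
      _ = _ := by simp [mul_assoc]
  · intro y hy
    rw [Finset.prod_ne_zero_iff] at hy
    have h1 : ‖ℓ y‖ ≤ 1 := by
      rw [pi_norm_le_iff_of_nonneg zero_le_one]
      intro k
      have := hy k (Finset.mem_univ k)
      by_contra h
      push Not at h
      exact this (hat_eq_zero (by simpa using h.le))
    have h2 := hA.le_mul_dist y 0
    rw [map_zero, dist_zero_right, dist_zero_right] at h2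
    refine h2.trans ?_
    exact mul_le_of_le_one_right (by positivity) h1

open Classical in
lemma log_bump_lipschitz {E ι : Type*} [NormedAddCommGroup E] [Fintype ι] [Nonempty ι]
    (p : ι → E → ℝ) (hp0 : ∀ w x, 0 ≤ p w x) (hp : ∀ w x y, |p w x - p w y| ≤ ‖x - y‖)
    (hpn : ∀ x, ∃ w, ‖x‖ ≤ p w x) (F : (ι → ℝ) → ℝ) (L T : ℝ) (hL : 0 ≤ L) (hT : 0 ≤ T)
    (hF0 : ∀ y, 0 ≤ F y) (hF1 : ∀ y, F y ≤ 1)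
    (hF : ∀ y y', |F y - F y'| ≤ L * ‖y - y'‖) (hFT : ∀ y, F y ≠ 0 → ‖y‖ ≤ T)
    (f : E → ℝ) (hf : ∀ x, f x = if ∀ w, p w x ≠ 0 then F (fun w => Real.log (p w x)) else 0) :
    ∃ L' T' : ℝ, 0 ≤ T' ∧ (∀ x y, |f x - f y| ≤ L' * ‖x - y‖) ∧ (∀ x, T' < ‖x‖ → f x = 0) := by
  have hf0 : ∀ x, 0 ≤ f x := by
    intro x; rw [hf]; split_ifs
    · exact hF0 _
    · exact le_rfl
  have hf1 : ∀ x, f x ≤ 1 := by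
    intro x; rw [hf]; split_ifs
    · exact hF1 _
    · exact zero_le_one
  have hsupp : ∀ x, f x ≠ 0 → (∀ w, 0 < p w x) ∧ ∀ w, |Real.log (p w x)| ≤ T := by
    intro x hx
    rw [hf] at hx
    split_ifs at hx with h
    · refine ⟨fun w => lt_of_le_of_ne (hp0 w x) (h w).symm, fun w => ?_⟩
      have := hFT _ hx
      exact (norm_le_pi_norm (fun w => Real.log (p w x)) w).trans this
    · exact absurd rfl hx
  set ε := Real.exp (-T) with hε
  have hεpos : 0 < ε := Real.exp_pos _
  have hlow : ∀ x, f x ≠ 0 → ∀ w, ε ≤ p w x := by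
    intro x hx w
    obtain ⟨h1, h2⟩ := hsupp x hx
    rw [hε, ← Real.le_log_iff_exp_le (h1 w)]
    exact (abs_le.mp (h2 w)).1
  have key : ∀ x y, f x ≠ 0 → |f x - f y| ≤ ((L + 1) * (2 / ε)) * ‖x - y‖ := by
    intro x y hx
    by_cases hxy : ε / 2 ≤ ‖x - y‖
    · have h1 : |f x - f y| ≤ 1 := by
        rw [abs_le]; constructor <;> linarith [hf0 x, hf1 x, hf0 y, hf1 y]
      refine h1.trans ?_
      have h2 : 1 ≤ (2 / ε) * ‖x - y‖ := by
        rw [div_mul_eq_mul_div, le_div_iff₀ hεpos]; linarith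
      nlinarith
    · push Not at hxy
      have hx1 := (hsupp x hx).1
      have hxl := hlow x hx
      have hyl : ∀ w, ε / 2 ≤ p w y := by
        intro w
        have := abs_le.mp (hp w x y)
        linarith [hxl w]
      have hy1 : ∀ w, 0 < p w y := fun w => lt_of_lt_of_le (by positivity) (hyl w)
      rw [hf x, hf y, if_pos (fun w => (hx1 w).ne'), if_pos (fun w => (hy1 w).ne')]
      refine (hF _ _).trans ?_
      have hlog : ∀ a b : ℝ, ε / 2 ≤ a → ε / 2 ≤ b → Real.log a - Real.log b ≤ 2 / ε * |a - b| := by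
        intro a b ha hb
        have ha0 : 0 < a := lt_of_lt_of_le (by positivity) ha
        have hb0 : 0 < b := lt_of_lt_of_le (by positivity) hb
        rw [← Real.log_div ha0.ne' hb0.ne']
        have h1 := Real.log_le_sub_one_of_pos (div_pos ha0 hb0)
        have h2 : a / b - 1 = (a - b) / b := by field_simp
        rw [h2] at h1
        refine h1.trans ?_
        calc (a - b) / b ≤ |a - b| / b := by gcongr; exact le_abs_self _
          _ ≤ |a - b| / (ε / 2) := by gcongr
          _ = _ := by field_simp
      have h3 : ‖(fun w => Real.log (p w x)) - (fun w => Real.log (p w y))‖ ≤ 2 / ε * ‖x - y‖ := by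
        rw [pi_norm_le_iff_of_nonneg (by positivity)]
        intro w
        rw [Pi.sub_apply, Real.norm_eq_abs]
        have hxl' : ε / 2 ≤ p w x := by linarith [hxl w]
        have h4 : 2 / ε * |p w x - p w y| ≤ 2 / ε * ‖x - y‖ := by gcongr; exact hp w x y
        rw [abs_le]
        constructor
        · have := hlog _ _ (hyl w) hxl'
          rw [abs_sub_comm] at this
          linarith
        · exact (hlog _ _ hxl' (hyl w)).trans h4
      have h5 : 0 ≤ 2 / ε * ‖x - y‖ := by positivity
      nlinarith
  refine ⟨(L + 1) * (2 / ε), Real.exp T, (Real.exp_pos T).le, ?_, ?_⟩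
  · intro x y
    by_cases hx : f x = 0
    · by_cases hy : f y = 0
      · rw [hx, hy]; simp; positivity
      · rw [abs_sub_comm, norm_sub_rev]; exact key y x hy
    · exact key x y hx
  · intro x hx
    by_contra h
    obtain ⟨h1, h2⟩ := hsupp x h
    obtain ⟨w, hw⟩ := hpn x
    have := (abs_le.mp (h2 w)).2
    rw [Real.log_le_iff_le_exp (h1 w)] at this
    linarith

end PIT



namespace PIT

open MeasureTheory Set Topology

lemma tsum_hat_int (c : ℝ) : ∑' k : ℤ, ENNReal.ofReal (hat (k + c)) = 1 := by
  set a : ℤ := -⌊c⌋ with ha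
  have hfr : (a : ℝ) + c = Int.fract c := by
    rw [ha, Int.fract]; push_cast; ring
  have h0 := Int.fract_nonneg c
  have h1 := Int.fract_lt_one c
  rw [tsum_eq_sum (s := {a, a - 1})]
  · rw [Finset.sum_pair (by omega), ← ENNReal.ofReal_add (hat_nonneg _) (hat_nonneg _)]
    push_cast
    rw [show (a : ℝ) - 1 + c = Int.fract c - 1 by linarith, hfr]
    unfold hat
    rw [abs_of_nonneg h0, abs_of_nonpos (by linarith), max_eq_right (by linarith), max_eq_right (by linarith)]
    rw [show 1 - Int.fract c + (1 - -(Int.fract c - 1)) = 1 by ring]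
    simp
  · intro k hk
    simp only [Finset.mem_insert, Finset.mem_singleton, not_or] at hk
    rw [hat_eq_zero, ENNReal.ofReal_zero]
    have hk' : k + c = (k - a : ℤ) + Int.fract c := by push_cast; linarith
    rw [hk']
    rcases lt_or_gt_of_ne hk.1 with h | h
    · have : k - a ≤ -2 := by omega
      have : ((k - a : ℤ) : ℝ) ≤ -2 := by exact_mod_cast this
      rw [abs_of_nonpos] <;> linarith
    · have : 1 ≤ k - a := by omega
      have : (1:ℝ) ≤ ((k - a : ℤ) : ℝ) := by exact_mod_cast this
      rw [abs_of_nonneg] <;> linarith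

lemma tsum_prod_hat (r : ℕ) (c : Fin r → ℝ) :
    ∑' m : Fin r → ℤ, ENNReal.ofReal (∏ i, hat (m i + c i)) = 1 := by
  induction r with
  | zero => simp
  | succ r ih =>
    rw [← (Fin.consEquiv (fun _ : Fin (r + 1) => ℤ)).tsum_eq, ENNReal.tsum_prod']
    have : ∀ (a : ℤ) (b : Fin r → ℤ), ENNReal.ofReal (∏ i, hat (((Fin.consEquiv fun _ : Fin (r + 1) => ℤ) (a, b) i : ℤ) + c i)) =
        ENNReal.ofReal (hat (a + c 0)) * ENNReal.ofReal (∏ i, hat (b i + c i.succ)) := by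
      intro a b
      rw [Fin.prod_univ_succ, ENNReal.ofReal_mul (hat_nonneg _)]
      simp [Fin.consEquiv]
    simp_rw [this, ENNReal.tsum_mul_left, ih, mul_one]
    exact tsum_hat_int (c 0)

section NF
open NumberField NumberField.InfinitePlace NumberField.mixedEmbedding NumberField.Units
  NumberField.Units.dirichletUnitTheorem

open scoped Classical

variable (K : Type*) [Field K] [NumberField K]

/-- The basis of the log space given by the fundamental units. -/
noncomputable def logBasis : Module.Basis (Fin (Units.rank K)) ℝ (logSpace K) :=
  (basisUnitLattice K).ofZLatticeBasis ℝ (unitLattice K)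

/-- The logarithmic weight. -/
noncomputable def wt (x : mixedSpace K) : ℝ := ∏ i, hat ((logBasis K).repr (logMap x) i)

/-- The bump function. -/
noncomputable def bump (x : mixedSpace K) : ℝ :=
  if mixedEmbedding.norm x ≠ 0 then wt K x * hat (Real.log (mixedEmbedding.norm x)) else 0

variable {K}

lemma wt_nonneg (x : mixedSpace K) : 0 ≤ wt K x := Finset.prod_nonneg fun _ _ => hat_nonneg _

lemma bump_nonneg (x : mixedSpace K) : 0 ≤ bump K x := by
  unfold bump; split_ifs
  · exact mul_nonneg (wt_nonneg _) (hat_nonneg _)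
  · exact le_rfl

lemma repr_logEmbedding (ζ : torsion K) (m : Fin (Units.rank K) → ℤ) (i : Fin (Units.rank K)) :
    (logBasis K).repr (logEmbedding K (Additive.ofMul ((ζ : (𝓞 K)ˣ) * ∏ i, fundSystem K i ^ m i))) i = m i := by
  have h1 : logEmbedding K (Additive.ofMul ((ζ : (𝓞 K)ˣ) * ∏ i, fundSystem K i ^ m i)) =
      ∑ i, (m i : ℝ) • logBasis K i := by
    rw [ofMul_mul, map_add, ofMul_prod, map_sum, (logEmbedding_eq_zero_iff).mpr ζ.2, zero_add]
    refine Finset.sum_congr rfl fun j _ => ?_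
    rw [ofMul_zpow, map_zsmul, logEmbedding_fundSystem, logBasis, Module.Basis.ofZLatticeBasis_apply]
    rw [Int.cast_smul_eq_zsmul]
  rw [h1]
  simp [Finsupp.single_apply]

lemma tsum_units_wt {x : mixedSpace K} (hx : mixedEmbedding.norm x ≠ 0) :
    ∑' u : (𝓞 K)ˣ, ENNReal.ofReal (wt K (u • x)) = (torsionOrder K : ENNReal) := by
  have hbij : Function.Bijective (fun p : torsion K × (Fin (Units.rank K) → ℤ) =>
      (p.1 : (𝓞 K)ˣ) * ∏ i, fundSystem K i ^ p.2 i) := by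
    rw [Function.bijective_iff_existsUnique]
    intro u
    obtain ⟨p, hp, hu⟩ := exist_unique_eq_mul_prod K u
    exact ⟨p, hp.symm, fun q hq => hu q hq.symm⟩
  rw [← (Equiv.ofBijective _ hbij).tsum_eq, ENNReal.tsum_prod']
  have : ∀ (ζ : torsion K) (m : Fin (Units.rank K) → ℤ),
      ENNReal.ofReal (wt K ((Equiv.ofBijective _ hbij (ζ, m)) • x)) =
      ENNReal.ofReal (∏ i, hat (m i + (logBasis K).repr (logMap x) i)) := by
    intro ζ m
    rw [Equiv.ofBijective_apply, wt, logMap_unit_smul _ hx]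
    congr 1
    refine Finset.prod_congr rfl fun i _ => ?_
    rw [map_add, Finsupp.add_apply, repr_logEmbedding]
  simp_rw [this, tsum_prod_hat]
  rw [ENNReal.tsum_const, mul_one, ENat.card_eq_coe_natCard, torsionOrder]
  simp

lemma bump_smul {x : mixedSpace K} (hx : mixedEmbedding.norm x ≠ 0) {R : ℝ} (hR : 0 < R) :
    bump K (R⁻¹ • x) = wt K x *
      hat (Real.log ((mixedEmbedding.norm x)⁻¹ * R ^ Module.finrank ℚ K)) := by
  have hn : mixedEmbedding.norm (R⁻¹ • x) = (R ^ Module.finrank ℚ K)⁻¹ * mixedEmbedding.norm x := by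
    rw [mixedEmbedding.norm_smul, abs_of_pos (inv_pos.mpr hR), inv_pow]
  have hRn : 0 < R ^ Module.finrank ℚ K := by positivity
  have h1 : mixedEmbedding.norm (R⁻¹ • x) ≠ 0 := by
    rw [hn]; exact mul_ne_zero (inv_ne_zero hRn.ne') hx
  rw [bump, if_pos h1, wt, wt, logMap_real_smul hx (inv_ne_zero hR.ne'), hn]
  congr 1
  have : Real.log ((R ^ Module.finrank ℚ K)⁻¹ * mixedEmbedding.norm x) =
      - Real.log ((mixedEmbedding.norm x)⁻¹ * R ^ Module.finrank ℚ K) := by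
    rw [← Real.log_inv, mul_inv, inv_inv, mul_comm]
  rw [this]
  unfold hat
  rw [abs_neg]

lemma bump_eq_zero {x : mixedSpace K} (hx : mixedEmbedding.norm x = 0) : bump K x = 0 := by
  simp [bump, hx]

lemma bump_one : bump K 1 = 1 := by
  have : mixedEmbedding.norm (1 : mixedSpace K) = 1 := map_one _
  simp [bump, wt, hat]

lemma normAtPlace_le_norm (w : InfinitePlace K) (x : mixedSpace K) : normAtPlace w x ≤ ‖x‖ := by
  rw [norm_eq_sup'_normAtPlace]
  exact Finset.le_sup' (fun w => normAtPlace w x) (Finset.mem_univ w)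

lemma normAtPlace_sub_le (w : InfinitePlace K) (x y : mixedSpace K) :
    |normAtPlace w x - normAtPlace w y| ≤ ‖x - y‖ := by
  have h : ∀ x y : mixedSpace K, normAtPlace w x - normAtPlace w y ≤ ‖x - y‖ := by
    intro x y
    have := normAtPlace_add_le w (x - y) y
    rw [sub_add_cancel] at this
    linarith [normAtPlace_le_norm w (x - y)]
  rw [abs_le]
  constructor
  · have := h y x; rw [norm_sub_rev] at this; linarith
  · exact h x y

variable (K) in
/-- Linear functionals. -/
noncomputable def linF : (InfinitePlace K → ℝ) →ₗ[ℝ] (Option (Fin (Units.rank K)) → ℝ) where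
  toFun y k := match k with
    | none => ∑ w, mult w * y w
    | some i => (logBasis K).repr (fun w => mult w.1 * (y w.1 - (∑ w, mult w * y w) * (Module.finrank ℚ K : ℝ)⁻¹)) i
  map_add' y z := by
    ext k
    cases k with
    | none => simp [mul_add, Finset.sum_add_distrib]
    | some i =>
      simp only [Pi.add_apply, mul_add, Finset.sum_add_distrib]
      rw [← Finsupp.add_apply, ← map_add]
      congr 2
      ext w
      simp only [Pi.add_apply]
      ring
  map_smul' c y := by
    ext k
    cases k with
    | none => simp [Finset.mul_sum]; refine Finset.sum_congr rfl fun _ _ => by ring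
    | some i =>
      simp only [Pi.smul_apply, smul_eq_mul, RingHom.id_apply]
      have hrs : ∀ v : logSpace K, c * (logBasis K).repr v i = (logBasis K).repr (c • v) i := by
        intro v; rw [map_smul]; rfl
      rw [hrs]
      congr 2
      ext w
      simp only [Pi.smul_apply, smul_eq_mul]
      rw [show ∑ w : InfinitePlace K, (mult w : ℝ) * (c * y w) = c * ∑ w, mult w * y w by
        rw [Finset.mul_sum]; refine Finset.sum_congr rfl fun _ _ => by ring]
      ring

lemma linF_injective : Function.Injective (linF K) := by
  rw [← LinearMap.ker_eq_bot, LinearMap.ker_eq_bot']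
  intro y hy
  have h0 : ∑ w, (mult w : ℝ) * y w = 0 := congrFun hy none
  have h1 : ∀ i, (logBasis K).repr (fun w => mult w.1 * (y w.1 - (∑ w, mult w * y w) * (Module.finrank ℚ K : ℝ)⁻¹)) i = 0 :=
    fun i => congrFun hy (some i)
  rw [h0] at h1
  have h2 : (fun w : {w : InfinitePlace K // w ≠ w₀} => (mult w.1 : ℝ) * (y w.1 - 0 * (Module.finrank ℚ K : ℝ)⁻¹)) = 0 := by
    rw [← (logBasis K).repr.map_eq_zero_iff]
    ext i
    exact h1 i
  have h3 : ∀ w : InfinitePlace K, w ≠ w₀ → y w = 0 := by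
    intro w hw
    have := congrFun h2 ⟨w, hw⟩
    simpa [mult_coe_ne_zero] using this
  have h4 : y w₀ = 0 := by
    rw [Finset.sum_eq_single w₀ (fun w _ hw => by rw [h3 w hw, mul_zero]) (by simp)] at h0
    simpa [mult_coe_ne_zero] using h0
  ext w
  by_cases hw : w = w₀
  · rw [hw, h4]; rfl
  · rw [h3 w hw]; rfl

variable (K) in
lemma bump_lipschitz : ∃ L T : ℝ, 0 ≤ T ∧ (∀ x y, |bump K x - bump K y| ≤ L * ‖x - y‖) ∧
    (∀ x, T < ‖x‖ → bump K x = 0) := by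
  obtain ⟨L, T, hL, hT, h1, h2⟩ := hat_prod_lipschitz (linF K) linF_injective
  refine log_bump_lipschitz (fun w : InfinitePlace K => normAtPlace w) (fun w x => normAtPlace_nonneg w x)
    normAtPlace_sub_le ?_ (fun y => ∏ k, hat (linF K y k)) L T hL hT
    (fun y => Finset.prod_nonneg fun _ _ => hat_nonneg _)
    (fun y => Finset.prod_le_one (fun _ _ => hat_nonneg _) fun _ _ => hat_le_one _) h1 h2 _ ?_
  · intro x
    obtain ⟨w, -, hw⟩ := Finset.exists_mem_eq_sup' (Finset.univ_nonempty) (fun w => normAtPlace w x)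
    exact ⟨w, by rw [norm_eq_sup'_normAtPlace, hw]⟩
  · intro x
    unfold bump
    simp only [← mixedEmbedding.norm_ne_zero_iff]
    split_ifs with h
    · rw [Fintype.prod_option, mul_comm]
      have hl : Real.log (mixedEmbedding.norm x) = ∑ w, mult w * Real.log (normAtPlace w x) := by
        rw [mixedEmbedding.norm_apply, Real.log_prod]
        · refine Finset.sum_congr rfl fun w _ => by rw [Real.log_pow]
        · intro w _
          exact pow_ne_zero _ (mixedEmbedding.norm_ne_zero_iff.mp h w)
      congr 1
      · rw [hl]; rfl
      · unfold wt
        refine Finset.prod_congr rfl fun i _ => ?_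
        congr 1
        change _ = (logBasis K).repr (fun w => mult w.1 * (_ - (∑ w, mult w * Real.log (normAtPlace w x)) * (Module.finrank ℚ K : ℝ)⁻¹)) i
        rw [← hl]
        rfl
    · rfl

variable (K) in
lemma bump_integral_pos : 0 < ∫ x : mixedSpace K, bump K x := by
  obtain ⟨L, T, hT, hL, hs⟩ := bump_lipschitz K
  have hc : Continuous (bump K) := by
    have : LipschitzWith (Real.toNNReal |L|) (bump K) := by
      refine LipschitzWith.of_dist_le_mul fun x y => ?_
      rw [Real.dist_eq, dist_eq_norm, Real.coe_toNNReal _ (abs_nonneg L)]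
      exact (hL x y).trans (by gcongr; exact le_abs_self L)
    exact this.continuous
  have hcs : HasCompactSupport (bump K) := by
    apply HasCompactSupport.of_support_subset_isCompact (isCompact_closedBall (0 : mixedSpace K) T)
    intro x hx
    by_contra h
    exact hx (hs x (by simpa using h))
  refine hc.integral_pos_of_hasCompactSupport_nonneg_nonzero hcs bump_nonneg (x := 1) ?_
  rw [bump_one]; exact one_ne_zero

end NF

end PIT



namespace PIT

open MeasureTheory Set Topology

section NF2

open NumberField NumberField.InfinitePlace NumberField.mixedEmbedding NumberField.Units
  NumberField.Units.dirichletUnitTheorem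

open scoped Classical nonZeroDivisors

variable {K : Type*} [Field K] [NumberField K]

lemma mem_lat (J : (Ideal (𝓞 K))⁰) (x : mixedSpace K) :
    x ∈ idealLattice K (FractionalIdeal.mk0 K J) ↔
      ∃ a : 𝓞 K, a ∈ (J : Ideal (𝓞 K)) ∧ mixedEmbedding K (a : K) = x := by
  rw [mem_idealLattice]
  constructor
  · rintro ⟨y, hy, rfl⟩
    have hy' : y ∈ ((FractionalIdeal.mk0 K J : (FractionalIdeal (𝓞 K)⁰ K)ˣ) :
      FractionalIdeal (𝓞 K)⁰ K) := hy
    rw [FractionalIdeal.coe_mk0, FractionalIdeal.mem_coeIdeal] at hy'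
    obtain ⟨a, ha, rfl⟩ := hy'
    exact ⟨a, ha, rfl⟩
  · rintro ⟨a, ha, rfl⟩
    refine ⟨a, ?_, rfl⟩
    show (a : K) ∈ ((FractionalIdeal.mk0 K J : (FractionalIdeal (𝓞 K)⁰ K)ˣ) :
      FractionalIdeal (𝓞 K)⁰ K)
    rw [FractionalIdeal.coe_mk0, FractionalIdeal.mem_coeIdeal]
    exact ⟨a, ha, rfl⟩

lemma norm_int (a : 𝓞 K) : mixedEmbedding.norm (mixedEmbedding K (a : K)) =
    (Ideal.absNorm (Ideal.span {a}) : ℝ) := by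
  rw [Ideal.absNorm_span_singleton, norm_eq_norm, Nat.cast_natAbs, ← Algebra.coe_norm_int]
  push_cast
  rfl

set_option maxHeartbeats 1000000 in
lemma class_sum (J : (Ideal (𝓞 K))⁰) {R : ℝ} (hR : 0 < R) :
    ∑' l : idealLattice K (FractionalIdeal.mk0 K J),
      ENNReal.ofReal (bump K (R⁻¹ • (l : mixedSpace K))) =
    ∑' I : (Ideal (𝓞 K))⁰, if ClassGroup.mk0 (I * J) = 1 then
      (torsionOrder K : ENNReal) * ENNReal.ofReal (hat (Real.log
        ((Ideal.absNorm (I : Ideal (𝓞 K)) : ℝ)⁻¹ *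
          (R ^ Module.finrank ℚ K / (Ideal.absNorm (J : Ideal (𝓞 K)) : ℝ))))) else 0 := by
  set g : mixedSpace K → ENNReal := fun x => ENNReal.ofReal (bump K (R⁻¹ • x)) with hg
  let φ : {a : 𝓞 K // a ∈ (J : Ideal (𝓞 K))} → idealLattice K (FractionalIdeal.mk0 K J) :=
    fun a => ⟨mixedEmbedding K ((a : 𝓞 K) : K), (mem_lat J _).2 ⟨a, a.2, rfl⟩⟩
  have hφ : Function.Bijective φ := by
    constructor
    · intro a b hab
      have := mixedEmbedding_injective K (congrArg Subtype.val hab)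
      exact Subtype.ext (RingOfIntegers.ext this)
    · rintro ⟨x, hx⟩
      obtain ⟨a, ha, rfl⟩ := (mem_lat J _).1 hx
      exact ⟨⟨a, ha⟩, rfl⟩
  have h1 : ∑' l : idealLattice K (FractionalIdeal.mk0 K J), g l =
      ∑' a : {a : 𝓞 K // a ∈ (J : Ideal (𝓞 K))}, g (mixedEmbedding K ((a : 𝓞 K) : K)) :=
    ((Equiv.ofBijective φ hφ).tsum_eq (fun l => g l)).symm
  change ∑' l : idealLattice K (FractionalIdeal.mk0 K J), g l = _
  rw [h1]
  have h2 : ∀ a : {a : 𝓞 K // a ∈ (J : Ideal (𝓞 K))}, g (mixedEmbedding K ((a : 𝓞 K) : K)) =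
      ∑' I : (Ideal (𝓞 K))⁰, if Ideal.span {(a : 𝓞 K)} = (I : Ideal (𝓞 K)) * (J : Ideal (𝓞 K))
        then g (mixedEmbedding K ((a : 𝓞 K) : K)) else 0 := by
    intro a
    by_cases ha : (a : 𝓞 K) = 0
    · have : g (mixedEmbedding K ((a : 𝓞 K) : K)) = 0 := by
        simp only [hg]
        rw [bump_eq_zero, ENNReal.ofReal_zero]
        rw [ha]; simp [map_zero]
      simp [this]
    · have hd : (J : Ideal (𝓞 K)) ∣ Ideal.span {(a : 𝓞 K)} := by
        rw [Ideal.dvd_iff_le, Ideal.span_singleton_le_iff_mem]; exact a.2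
      obtain ⟨I, hI⟩ := hd
      have hI0 : I ∈ (Ideal (𝓞 K))⁰ := by
        rw [mem_nonZeroDivisors_iff_ne_zero]
        rintro rfl
        rw [mul_zero] at hI
        exact ha (by simpa using hI)
      rw [tsum_eq_single ⟨I, hI0⟩]
      · rw [if_pos]; rw [hI, mul_comm]
      · intro I' hI'
        rw [if_neg]
        intro h
        apply hI'
        apply Subtype.ext
        have hJ0 : (J : Ideal (𝓞 K)) ≠ 0 := nonZeroDivisors.coe_ne_zero J
        rw [hI, mul_comm] at h
        exact (mul_right_cancel₀ hJ0 h).symm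
  rw [tsum_congr h2, ENNReal.tsum_comm]
  refine tsum_congr fun I => ?_
  split_ifs with hIJ
  · rw [ClassGroup.mk0_eq_one_iff] at hIJ
    obtain ⟨a0, ha0⟩ := hIJ.principal
    have ha0' : Ideal.span {a0} = (I : Ideal (𝓞 K)) * (J : Ideal (𝓞 K)) := ha0.symm
    have ha0J : a0 ∈ (J : Ideal (𝓞 K)) := by
      have : a0 ∈ (I : Ideal (𝓞 K)) * (J : Ideal (𝓞 K)) := by
        rw [← ha0']; exact Ideal.mem_span_singleton_self a0
      exact (Ideal.mul_le_right : (I : Ideal (𝓞 K)) * (J : Ideal (𝓞 K)) ≤ J) this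
    have hI0 : (I : Ideal (𝓞 K)) ≠ 0 := nonZeroDivisors.coe_ne_zero I
    have hJ0 : (J : Ideal (𝓞 K)) ≠ 0 := nonZeroDivisors.coe_ne_zero J
    have ha00 : a0 ≠ 0 := by
      rintro rfl
      have : (I : Ideal (𝓞 K)) * (J : Ideal (𝓞 K)) = 0 := by rw [← ha0']; simp
      exact (mul_ne_zero hI0 hJ0) this
    let ψ : (𝓞 K)ˣ → {a : 𝓞 K // a ∈ (J : Ideal (𝓞 K))} := fun u => ⟨u * a0, Ideal.mul_mem_left _ _ ha0J⟩
    have hψ : Function.Injective ψ := by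
      intro u v huv
      have := congrArg Subtype.val huv
      exact Units.ext (mul_right_cancel₀ ha00 this)
    rw [← hψ.tsum_eq]
    · have hnorm : mixedEmbedding.norm (mixedEmbedding K (a0 : K)) =
        (Ideal.absNorm (I : Ideal (𝓞 K)) : ℝ) * (Ideal.absNorm (J : Ideal (𝓞 K)) : ℝ) := by
        rw [norm_int, ha0', map_mul]; push_cast; rfl
      have hNI : (Ideal.absNorm (I : Ideal (𝓞 K)) : ℝ) ≠ 0 := by
        exact_mod_cast (Ideal.absNorm_pos_of_nonZeroDivisors I).ne'
      have hNJ : (Ideal.absNorm (J : Ideal (𝓞 K)) : ℝ) ≠ 0 := by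
        exact_mod_cast (Ideal.absNorm_pos_of_nonZeroDivisors J).ne'
      have hnorm0 : mixedEmbedding.norm (mixedEmbedding K (a0 : K)) ≠ 0 := by
        rw [hnorm]; exact mul_ne_zero hNI hNJ
      rw [← tsum_units_wt hnorm0, ← ENNReal.tsum_mul_right]
      refine tsum_congr fun u => ?_
      have hs : Ideal.span {((ψ u).1 : 𝓞 K)} =
          (I : Ideal (𝓞 K)) * (J : Ideal (𝓞 K)) := by
        rw [← ha0', Ideal.span_singleton_eq_span_singleton]
        exact (associated_unit_mul_left a0 (u : 𝓞 K) u.isUnit)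
      rw [if_pos hs]
      have hm : mixedEmbedding K (((ψ u).1 : 𝓞 K) : K) =
          u • mixedEmbedding K (a0 : K) := by
        rw [unitSMul_smul, ← map_mul]; rfl
      simp only [hg]
      rw [hm, bump_smul (by rw [norm_unit_smul]; exact hnorm0) hR, norm_unit_smul,
        ENNReal.ofReal_mul (wt_nonneg _), hnorm]
      congr 4
      field_simp
    · intro a ha
      rw [Function.mem_support] at ha
      have h : Ideal.span {(a : 𝓞 K)} = (I : Ideal (𝓞 K)) * (J : Ideal (𝓞 K)) := by
        by_contra h; exact ha (if_neg h)
      rw [← ha0', Ideal.span_singleton_eq_span_singleton] at h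
      obtain ⟨u, hu⟩ := h.symm
      exact ⟨u, Subtype.ext (by rw [← hu, mul_comm])⟩
  · rw [ENNReal.tsum_eq_zero]
    intro a
    rw [if_neg]
    intro h
    apply hIJ
    rw [ClassGroup.mk0_eq_one_iff]
    exact ⟨⟨(a : 𝓞 K), h.symm⟩⟩

end NF2

end PIT



namespace PIT

open MeasureTheory Set Topology

section NF3

open NumberField NumberField.InfinitePlace NumberField.mixedEmbedding NumberField.Units
  NumberField.Units.dirichletUnitTheorem

open scoped Classical nonZeroDivisors

variable (K : Type*) [Field K] [NumberField K]

/-- Norm of a nonzero ideal, as a real number. -/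
noncomputable def nm (I : (Ideal (𝓞 K))⁰) : ℝ := (Ideal.absNorm (I : Ideal (𝓞 K)) : ℝ)

variable {K}

lemma one_le_nm (I : (Ideal (𝓞 K))⁰) : 1 ≤ nm K I := by
  unfold nm
  exact_mod_cast (Ideal.absNorm_pos_of_nonZeroDivisors I)

lemma nm_pos (I : (Ideal (𝓞 K))⁰) : 0 < nm K I := lt_of_lt_of_le one_pos (one_le_nm I)

lemma bump_sum_summable (J : (Ideal (𝓞 K))⁰) {R : ℝ} (hR : 0 < R) :
    Summable fun l : idealLattice K (FractionalIdeal.mk0 K J) =>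
      bump K (R⁻¹ • (l : mixedSpace K)) := by
  obtain ⟨L, T, hT, -, h⟩ := bump_lipschitz K
  apply summable_of_hasFiniteSupport
  refine (lattice_finite (idealLattice K (FractionalIdeal.mk0 K J)) (R * T)).subset ?_
  intro l hl
  rw [Function.mem_support] at hl
  by_contra hcon
  apply hl
  apply h
  rw [Set.mem_ofPred_eq, not_le] at hcon
  rw [_root_.norm_smul, norm_inv, Real.norm_of_nonneg hR.le]
  rw [lt_inv_mul_iff₀ hR]
  exact hcon

lemma all_sum (J : ClassGroup (𝓞 K) → (Ideal (𝓞 K))⁰) (hJ : ∀ C, ClassGroup.mk0 (J C) = C⁻¹)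
    (R : ClassGroup (𝓞 K) → ℝ) (x : ℝ) (hR : ∀ C, 0 < R C)
    (hRx : ∀ C, R C ^ Module.finrank ℚ K = x * nm K (J C)) :
    (torsionOrder K : ℝ) * smoothA (nm K) x = ∑ C,
      ∑' l : idealLattice K (FractionalIdeal.mk0 K (J C)),
        bump K ((R C)⁻¹ • (l : mixedSpace K)) := by
  have h1 : (torsionOrder K : ENNReal) * ∑' I : (Ideal (𝓞 K))⁰,
      ENNReal.ofReal (hat (Real.log ((nm K I)⁻¹ * x))) =
      ∑ C, ∑' l : idealLattice K (FractionalIdeal.mk0 K (J C)),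
        ENNReal.ofReal (bump K ((R C)⁻¹ • (l : mixedSpace K))) := by
    simp_rw [fun C => class_sum (J C) (hR C)]
    rw [← tsum_fintype (L := SummationFilter.unconditional _), ENNReal.tsum_comm, ← ENNReal.tsum_mul_left]
    refine tsum_congr fun I => ?_
    rw [tsum_eq_single (ClassGroup.mk0 I)]
    · rw [map_mul, hJ, mul_inv_cancel, if_pos rfl, hRx]
      congr 5
      have := nm_pos (J (ClassGroup.mk0 I))
      unfold nm at this ⊢
      field_simp
    · intro C hC
      rw [map_mul, hJ, if_neg]
      intro h
      exact hC (mul_inv_eq_one.1 h).symm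
  have h2 := congrArg ENNReal.toReal h1
  rw [ENNReal.toReal_mul, ENNReal.tsum_toReal_eq (fun _ => ENNReal.ofReal_ne_top)] at h2
  simp_rw [ENNReal.toReal_ofReal (hat_nonneg _)] at h2
  rw [ENNReal.toReal_natCast] at h2
  unfold smoothA
  rw [h2, ENNReal.toReal_sum]
  · refine Finset.sum_congr rfl fun C _ => ?_
    rw [ENNReal.tsum_toReal_eq (fun _ => ENNReal.ofReal_ne_top)]
    simp_rw [ENNReal.toReal_ofReal (bump_nonneg _)]
  · intro C _
    rw [← ENNReal.ofReal_tsum_of_nonneg (fun _ => bump_nonneg _) (bump_sum_summable (J C) (hR C))]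
    exact ENNReal.ofReal_ne_top

variable (K)

lemma smooth_count : ∃ c C : ℝ, 0 < c ∧ ∀ x, 1 ≤ x →
    |smoothA (nm K) x - c * x| ≤ C * x ^ (1 - (Module.finrank ℚ K : ℝ)⁻¹) := by
  choose J hJ using fun C : ClassGroup (𝓞 K) => ClassGroup.mk0_surjective C⁻¹
  obtain ⟨L, T, hT, hL, hsupp⟩ := bump_lipschitz K
  choose E hE using fun C => lattice_sum (volume : Measure (mixedSpace K))
    (idealLattice K (FractionalIdeal.mk0 K (J C))) (bump K) L T hT hL hsupp
  set n := Module.finrank ℚ K with hn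
  have hn0 : 0 < n := Module.finrank_pos
  set v : ClassGroup (𝓞 K) → ℝ := fun C => (∫ x : mixedSpace K, bump K x) /
    ZLattice.covolume (idealLattice K (FractionalIdeal.mk0 K (J C))) volume with hv
  have hv0 : ∀ C, 0 < v C := fun C => div_pos (bump_integral_pos K) (ZLattice.covolume_pos _ _)
  have hw : (0:ℝ) < torsionOrder K := by exact_mod_cast torsionOrder_pos K
  refine ⟨(∑ C, nm K (J C) * v C) / torsionOrder K,
    (∑ C, E C * nm K (J C) ^ (1 - (n : ℝ)⁻¹)) / torsionOrder K, ?_, ?_⟩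
  · apply div_pos _ hw
    exact Finset.sum_pos (fun C _ => mul_pos (nm_pos _) (hv0 C)) ⟨1, Finset.mem_univ _⟩
  intro x hx
  have hx0 : 0 < x := by linarith
  set R : ClassGroup (𝓞 K) → ℝ := fun C => (x * nm K (J C)) ^ ((n : ℝ)⁻¹) with hR
  have hxn : ∀ C, 0 < x * nm K (J C) := fun C => mul_pos hx0 (nm_pos _)
  have hxn1 : ∀ C, 1 ≤ x * nm K (J C) := fun C => one_le_mul_of_one_le_of_one_le hx (one_le_nm _)
  have hR0 : ∀ C, 0 < R C := fun C => Real.rpow_pos_of_pos (hxn C) _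
  have hR1 : ∀ C, 1 ≤ R C := fun C => Real.one_le_rpow (hxn1 C) (by positivity)
  have hRn : ∀ C, R C ^ n = x * nm K (J C) := fun C =>
    Real.rpow_inv_natCast_pow (hxn C).le hn0.ne'
  have hall := all_sum J hJ R x hR0 hRn
  have key : ∀ C, |∑' l : idealLattice K (FractionalIdeal.mk0 K (J C)),
        bump K ((R C)⁻¹ • (l : mixedSpace K)) - nm K (J C) * v C * x| ≤
        E C * nm K (J C) ^ (1 - (n : ℝ)⁻¹) * x ^ (1 - (n : ℝ)⁻¹) := by
    intro C
    have := hE C (R C) (hR1 C)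
    rw [mixedEmbedding.finrank K, ← hn, hRn] at this
    convert this using 1
    · congr 1; simp only [hv]; ring
    · rw [mul_assoc, ← Real.mul_rpow (nm_pos _).le hx0.le, mul_comm (nm K (J C)) x,
        Real.rpow_sub (hxn C), Real.rpow_one]
  have : smoothA (nm K) x = (∑ C, ∑' l : idealLattice K (FractionalIdeal.mk0 K (J C)),
        bump K ((R C)⁻¹ • (l : mixedSpace K))) / torsionOrder K := by
    rw [← hall]; field_simp
  rw [this, div_mul_eq_mul_div, ← sub_div, abs_div, abs_of_pos hw, div_mul_eq_mul_div]
  apply div_le_div_of_nonneg_right _ hw.le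
  rw [Finset.sum_mul, Finset.sum_mul, ← Finset.sum_sub_distrib]
  exact (Finset.abs_sum_le_sum_abs _ _).trans (Finset.sum_le_sum fun C _ => key C)

lemma count_bound : ∃ C : ℝ, 0 ≤ C ∧ ∀ k : ℕ,
    ((Nat.card {I : (Ideal (𝓞 K))⁰ // nm K I ≤ 2 ^ k} : ℕ) : ℝ) ≤ C * 2 ^ k := by
  have h := (NumberField.Ideal.tendsto_norm_le_div_atTop₀ K).comp
    (tendsto_pow_atTop_atTop_of_one_lt (one_lt_two (α := ℝ)))
  obtain ⟨C, hC⟩ := h.bddAbove_range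
  refine ⟨max C 0, le_max_right _ _, fun k => ?_⟩
  have := hC ⟨k, rfl⟩
  simp only [Function.comp_apply] at this
  rw [div_le_iff₀ (by positivity)] at this
  refine le_trans this ?_
  gcongr
  exact le_max_left _ _

lemma finite_nm_le (x : ℝ) : {I : (Ideal (𝓞 K))⁰ | nm K I ≤ x}.Finite := by
  refine (Ideal.finite_setOfPred_absNorm_le₀ (S := 𝓞 K) ⌊x⌋₊).subset fun I hI => ?_
  exact Nat.le_floor hI

lemma summable_nm {σ : ℝ} (hσ : 1 < σ) : Summable fun I => nm K I ^ (-σ) := by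
  obtain ⟨C, hC0, hC⟩ := count_bound K
  have hpos : ∀ I, 0 ≤ nm K I ^ (-σ) := fun I => Real.rpow_nonneg (nm_pos I).le _
  suffices h : ∑' I, ENNReal.ofReal (nm K I ^ (-σ)) ≠ ⊤ by
    have := ENNReal.summable_toReal h
    simpa [ENNReal.toReal_ofReal, hpos] using this
  have h1 : ∀ I, ENNReal.ofReal (nm K I ^ (-σ)) ≤
      ∑' k : ℕ, {I : (Ideal (𝓞 K))⁰ | nm K I ≤ 2 ^ (k+1)}.indicator
        (fun _ => ENNReal.ofReal ((2 ^ k : ℝ) ^ (-σ))) I := by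
    intro I
    obtain ⟨k, hk1, hk2⟩ := exists_nat_pow_near (one_le_nm I) (one_lt_two (α := ℝ))
    refine le_trans ?_ (ENNReal.le_tsum k)
    rw [indicator_of_mem (by exact hk2.le)]
    apply ENNReal.ofReal_le_ofReal
    exact Real.rpow_le_rpow_of_nonpos (by positivity) hk1 (by linarith)
  refine ne_top_of_le_ne_top ?_ (ENNReal.tsum_le_tsum h1)
  rw [ENNReal.tsum_comm]
  have h2 : ∀ k : ℕ, ∑' I, {I : (Ideal (𝓞 K))⁰ | nm K I ≤ 2 ^ (k+1)}.indicator
        (fun _ => ENNReal.ofReal ((2 ^ k : ℝ) ^ (-σ))) I ≤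
        ENNReal.ofReal (2 * C * ((2:ℝ) ^ (1 - σ)) ^ k) := by
    intro k
    rw [← tsum_subtype, ENNReal.tsum_set_const]
    have hf := finite_nm_le K (2 ^ (k+1))
    have : ({I : (Ideal (𝓞 K))⁰ | nm K I ≤ 2 ^ (k+1)}.encard : ENNReal) =
        ENNReal.ofReal (Nat.card {I : (Ideal (𝓞 K))⁰ // nm K I ≤ 2 ^ (k+1)}) := by
      rw [← hf.cast_ncard_eq, ENNReal.ofReal_natCast]
      rfl
    rw [this, ← ENNReal.ofReal_mul (by positivity)]
    apply ENNReal.ofReal_le_ofReal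
    refine (mul_le_mul_of_nonneg_right (hC (k+1)) (by positivity)).trans (le_of_eq ?_)
    rw [← Real.rpow_natCast ((2:ℝ) ^ (1 - σ)) k, ← Real.rpow_natCast 2 k, ← Real.rpow_mul two_pos.le,
      ← Real.rpow_mul two_pos.le, show (1 - σ) * (k:ℝ) = k + k * -σ by ring,
      Real.rpow_add two_pos, Real.rpow_natCast]
    ring
  refine ne_top_of_le_ne_top ?_ (ENNReal.tsum_le_tsum h2)
  rw [← ENNReal.ofReal_tsum_of_nonneg (fun k => by positivity)]
  · exact ENNReal.ofReal_ne_top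
  · apply Summable.mul_left
    apply summable_geometric_of_lt_one (by positivity)
    apply Real.rpow_lt_one_of_one_lt_of_neg one_lt_two (by linarith)

instance : Countable (Ideal (𝓞 K))⁰ := by
  have : (⋃ n : ℕ, {I : (Ideal (𝓞 K))⁰ | nm K I ≤ n}) = univ := by
    rw [eq_univ_iff_forall]
    intro I
    rw [mem_iUnion]
    exact ⟨Ideal.absNorm (I : Ideal (𝓞 K)), (le_refl _ : nm K I ≤ nm K I)⟩
  rw [← countable_univ_iff, ← this]
  exact countable_iUnion fun n => (finite_nm_le K n).countable

theorem zeta_continuation : ∃ δ : ℝ, δ < 1 ∧ ∃ W : ℂ → ℂ, DifferentiableOn ℂ W {s | δ < s.re} ∧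
    W 1 ≠ 0 ∧ ∀ s : ℂ, 1 < s.re → W s = (s - 1) * ∑' I, (nm K I : ℂ) ^ (-s) := by
  obtain ⟨c, C, hc, h⟩ := smooth_count K
  have hn0 : 0 < Module.finrank ℚ K := Module.finrank_pos
  have hn1 : (1:ℝ) ≤ (Module.finrank ℚ K : ℝ) := by exact_mod_cast hn0
  refine ⟨1 - (Module.finrank ℚ K : ℝ)⁻¹, by simp [hn0], ?_⟩
  exact continuation one_le_nm (fun σ hσ => summable_nm K hσ) c _ C hc
    (by rw [sub_nonneg]; exact inv_le_one_of_one_le₀ hn1) (by simp [hn0]) h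

end NF3

end PIT



namespace PIT

open MeasureTheory Set Topology

section EP

open NumberField IsDedekindDomain

open scoped Classical nonZeroDivisors

variable (K : Type*) [Field K] [NumberField K]

/-- Norm of a prime. -/
noncomputable def np (P : HeightOneSpectrum (𝓞 K)) : ℝ := (Ideal.absNorm P.asIdeal : ℝ)

variable {K}

/-- The prime power `P^(k+1)`. -/
noncomputable def ppow (q : HeightOneSpectrum (𝓞 K) × ℕ) : (Ideal (𝓞 K))⁰ :=
  ⟨q.1.asIdeal ^ (q.2 + 1), by
    rw [mem_nonZeroDivisors_iff_ne_zero]; exact pow_ne_zero _ q.1.ne_bot⟩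

lemma two_le_np (P : HeightOneSpectrum (𝓞 K)) : 2 ≤ np K P := by
  unfold np
  have h0 : Ideal.absNorm P.asIdeal ≠ 0 := by
    rw [Ne, Ideal.absNorm_eq_zero_iff]; exact P.ne_bot
  have h1 : Ideal.absNorm P.asIdeal ≠ 1 := by
    rw [Ne, Ideal.absNorm_eq_one_iff]; exact P.isPrime.ne_top
  have : 2 ≤ Ideal.absNorm P.asIdeal := by omega
  exact_mod_cast this

lemma nm_ppow (q : HeightOneSpectrum (𝓞 K) × ℕ) : nm K (ppow q) = np K q.1 ^ (q.2 + 1) := by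
  unfold nm np ppow
  push_cast [map_pow]
  rfl

lemma ppow_injective : Function.Injective (ppow (K := K)) := by
  rintro ⟨P, k⟩ ⟨Q, m⟩ h
  have h' : P.asIdeal ^ (k + 1) = Q.asIdeal ^ (m + 1) := congrArg Subtype.val h
  have hd : P.asIdeal ∣ Q.asIdeal ^ (m + 1) := h' ▸ dvd_pow_self _ (Nat.succ_ne_zero k)
  have hd2 := P.prime.dvd_of_dvd_pow hd
  have hPQ : P = Q := by
    apply HeightOneSpectrum.ext
    have := Ideal.dvd_iff_le.1 hd2
    exact (Q.isMaximal.eq_of_le P.isPrime.ne_top this).symm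
  subst hPQ
  have h2 := congrArg (nm K) h
  rw [nm_ppow, nm_ppow] at h2
  have h3 := (pow_right_inj₀ (by linarith [two_le_np P]) (by linarith [two_le_np P])).1 h2
  simp only at h3
  simp; omega

lemma nm_mul (I J : (Ideal (𝓞 K))⁰) : nm K (I * J) = nm K I * nm K J := by
  unfold nm
  push_cast [map_mul]
  rfl

lemma ppow_dvd_iff (I : (Ideal (𝓞 K))⁰) (P : HeightOneSpectrum (𝓞 K)) (k : ℕ) :
    ppow (P, k) ∣ I ↔ k < (Associates.mk P.asIdeal).count (Associates.mk (I : Ideal (𝓞 K))).factors := by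
  have hI : (I : Ideal (𝓞 K)) ≠ 0 := nonZeroDivisors.coe_ne_zero I
  rw [← Nat.succ_le_iff, ← Associates.prime_pow_dvd_iff_le (Associates.mk_ne_zero.2 hI)
    (Associates.irreducible_mk.2 P.irreducible), ← Associates.mk_pow, Associates.mk_le_mk_iff_dvd]
  constructor
  · rintro ⟨J, hJ⟩
    exact ⟨J, congrArg Subtype.val hJ⟩
  · rintro ⟨J, hJ⟩
    have hJ0 : J ≠ 0 := by rintro rfl; rw [mul_zero] at hJ; exact hI hJ
    exact ⟨⟨J, mem_nonZeroDivisors_iff_ne_zero.2 hJ0⟩, Subtype.ext hJ⟩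

lemma log_nm (I : (Ideal (𝓞 K))⁰) : HasSum (fun P : HeightOneSpectrum (𝓞 K) =>
    ((Associates.mk P.asIdeal).count (Associates.mk (I : Ideal (𝓞 K))).factors : ℝ) *
      Real.log (np K P)) (Real.log (nm K I)) := by
  have hI : (I : Ideal (𝓞 K)) ≠ 0 := nonZeroDivisors.coe_ne_zero I
  have hfin := Ideal.finite_factors hI
  have hz : ∀ P ∉ hfin.toFinset, (Associates.mk P.asIdeal).count
      (Associates.mk (I : Ideal (𝓞 K))).factors = 0 := by
    intro P hP
    by_contra h
    exact hP (hfin.mem_toFinset.2 ((Associates.count_ne_zero_iff_dvd hI P.irreducible).1 h))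
  have h1 : nm K I = ∏ P ∈ hfin.toFinset, np K P ^ ((Associates.mk P.asIdeal).count
      (Associates.mk (I : Ideal (𝓞 K))).factors) := by
    have := Ideal.finprod_heightOneSpectrum_factorization hI
    rw [finprod_eq_prod_of_mulSupport_subset (s := hfin.toFinset)] at this
    · unfold nm
      conv_lhs => rw [← this]
      rw [map_prod]
      push_cast
      refine Finset.prod_congr rfl fun P _ => ?_
      rw [HeightOneSpectrum.maxPowDividing, map_pow]
      push_cast
      rfl
    · intro P hP
      by_contra h
      apply hP
      show P.asIdeal ^ _ = 1
      rw [hz P h, pow_zero]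
  rw [h1, Real.log_prod]
  · simp_rw [Real.log_pow]
    apply hasSum_sum_of_ne_finset_zero
    intro P hP
    rw [hz P hP]; simp
  · intro P _
    have := two_le_np P
    positivity

lemma hasSum_lam (I : (Ideal (𝓞 K))⁰) : HasSum (fun q : HeightOneSpectrum (𝓞 K) × ℕ =>
    if ppow q ∣ I then Real.log (np K q.1) else 0) (Real.log (nm K I)) := by
  have hsum : Summable (fun q : HeightOneSpectrum (𝓞 K) × ℕ =>
    if ppow q ∣ I then Real.log (np K q.1) else 0) := by
    apply summable_of_hasFiniteSupport
    have : (ppow ⁻¹' {J : (Ideal (𝓞 K))⁰ | nm K J ≤ nm K I}).Finite :=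
      (finite_nm_le K _).preimage ppow_injective.injOn
    refine this.subset fun q hq => ?_
    have hd : ppow q ∣ I := by
      by_contra h; exact hq (if_neg h)
    obtain ⟨J, rfl⟩ := hd
    show nm K (ppow q) ≤ nm K (ppow q * J)
    rw [nm_mul]
    exact le_mul_of_one_le_right (nm_pos _).le (one_le_nm _)
  have h := hsum.hasSum
  have h2 := h.prod_fiberwise (g := fun P =>
    ((Associates.mk P.asIdeal).count (Associates.mk (I : Ideal (𝓞 K))).factors : ℝ) *
      Real.log (np K P)) (by
    intro P
    simp_rw [ppow_dvd_iff]
    convert hasSum_sum_of_ne_finset_zero (s := Finset.range ((Associates.mk P.asIdeal).count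
      (Associates.mk (I : Ideal (𝓞 K))).factors)) ?_ using 1
    · rw [Finset.sum_congr rfl (g := fun _ => Real.log (np K P))]
      · simp
      · intro k hk
        rw [if_pos (Finset.mem_range.1 hk)]
    · intro k hk
      rw [if_neg]
      rwa [Finset.mem_range] at hk
    · infer_instance)
  rwa [h2.unique (log_nm I)] at h

end EP

end PIT



namespace PIT

open MeasureTheory Set Topology

section EP2

open NumberField IsDedekindDomain

open scoped Classical nonZeroDivisors

variable (K : Type*) [Field K] [NumberField K]

/-- Dedekind zeta as a sum over ideals. -/
noncomputable def Zt (s : ℂ) : ℂ := ∑' I : (Ideal (𝓞 K))⁰, (nm K I : ℂ) ^ (-s)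

/-- Minus the logarithmic derivative. -/
noncomputable def G0 (s : ℂ) : ℂ := ∑' q : HeightOneSpectrum (𝓞 K) × ℕ,
  (Real.log (np K q.1) : ℂ) * (nm K (ppow q) : ℂ) ^ (-s)

variable {K}

lemma norm_nm_cpow (I : (Ideal (𝓞 K))⁰) (s : ℂ) : ‖(nm K I : ℂ) ^ (-s)‖ = nm K I ^ (-s.re) := by
  rw [Complex.norm_cpow_eq_rpow_re_of_pos (nm_pos I), Complex.neg_re]

lemma log_np_nonneg (P : HeightOneSpectrum (𝓞 K)) : 0 ≤ Real.log (np K P) :=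
  Real.log_nonneg (by linarith [two_le_np P])

variable (K)

lemma summable_log_nm {σ : ℝ} (hσ : 1 < σ) :
    Summable fun I => Real.log (nm K I) * nm K I ^ (-σ) := by
  have hε : 0 < (σ - 1) / 2 := by linarith
  refine Summable.of_nonneg_of_le (fun I => ?_) (fun I => ?_)
    ((summable_nm K (σ := (σ + 1) / 2) (by linarith)).mul_left ((σ - 1) / 2)⁻¹)
  · exact mul_nonneg (Real.log_nonneg (one_le_nm I)) (Real.rpow_nonneg (nm_pos I).le _)
  · calc Real.log (nm K I) * nm K I ^ (-σ) ≤
        (nm K I ^ ((σ - 1) / 2) / ((σ - 1) / 2)) * nm K I ^ (-σ) := by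
          apply mul_le_mul_of_nonneg_right (Real.log_le_rpow_div (nm_pos I).le hε)
            (Real.rpow_nonneg (nm_pos I).le _)
      _ = ((σ - 1) / 2)⁻¹ * (nm K I ^ ((σ - 1) / 2) * nm K I ^ (-σ)) := by ring
      _ = _ := by
        rw [← Real.rpow_add (nm_pos I)]
        congr 2; ring

lemma summable_lam {σ : ℝ} (hσ : 1 < σ) :
    Summable fun q : HeightOneSpectrum (𝓞 K) × ℕ =>
      Real.log (np K q.1) * nm K (ppow q) ^ (-σ) := by
  refine Summable.of_nonneg_of_le (fun q => ?_) (fun q => ?_)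
    ((summable_log_nm K hσ).comp_injective ppow_injective)
  · exact mul_nonneg (log_np_nonneg _) (Real.rpow_nonneg (nm_pos _).le _)
  · simp only [Function.comp_apply]
    apply mul_le_mul_of_nonneg_right _ (Real.rpow_nonneg (nm_pos _).le _)
    have := two_le_np q.1
    apply Real.log_le_log (by linarith)
    rw [nm_ppow]
    exact le_self_pow₀ (by linarith) (by omega)

lemma summable_Zt {s : ℂ} (hs : 1 < s.re) : Summable fun I => (nm K I : ℂ) ^ (-s) := by
  apply Summable.of_norm
  simp_rw [norm_nm_cpow]
  exact summable_nm K hs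

lemma summable_norm_G0 {s : ℂ} (hs : 1 < s.re) :
    Summable fun q : HeightOneSpectrum (𝓞 K) × ℕ =>
      ‖(Real.log (np K q.1) : ℂ) * (nm K (ppow q) : ℂ) ^ (-s)‖ := by
  refine (summable_lam K hs).congr fun q => ?_
  rw [norm_mul, norm_nm_cpow, Complex.norm_real, Real.norm_of_nonneg (log_np_nonneg _)]

lemma hasSum_log {s : ℂ} (hs : 1 < s.re) :
    HasSum (fun I => (Real.log (nm K I) : ℂ) * (nm K I : ℂ) ^ (-s)) (G0 K s * Zt K s) := by
  have hZ := summable_Zt K hs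
  have hZn : Summable fun I => ‖(nm K I : ℂ) ^ (-s)‖ := hZ.norm
  have hG := summable_norm_G0 K hs
  have hprod := summable_mul_of_summable_norm hG hZn
  have h1 := hG.of_norm.hasSum.mul hZ.hasSum hprod
  set f : (HeightOneSpectrum (𝓞 K) × ℕ) × (Ideal (𝓞 K))⁰ → ℂ := fun x =>
    ((if ppow x.1 ∣ x.2 then Real.log (np K x.1.1) else 0 : ℝ) : ℂ) * (nm K x.2 : ℂ) ^ (-s) with hf
  let i : (HeightOneSpectrum (𝓞 K) × ℕ) × (Ideal (𝓞 K))⁰ →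
    (HeightOneSpectrum (𝓞 K) × ℕ) × (Ideal (𝓞 K))⁰ := fun x => (x.1, ppow x.1 * x.2)
  have hi : Function.Injective i := by
    rintro ⟨q, I⟩ ⟨q', I'⟩ h
    simp only [i, Prod.mk.injEq] at h
    obtain ⟨rfl, h⟩ := h
    have := congrArg Subtype.val h
    have h0 : ((ppow q : (Ideal (𝓞 K))⁰) : Ideal (𝓞 K)) ≠ 0 := nonZeroDivisors.coe_ne_zero _
    simp only [Submonoid.coe_mul] at this
    rw [Prod.mk.injEq]
    exact ⟨rfl, Subtype.ext (mul_left_cancel₀ h0 this)⟩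
  have h2 : HasSum f (G0 K s * Zt K s) := by
    rw [← hi.hasSum_iff]
    · convert! h1 using 1
      ext ⟨q, I⟩
      simp only [hf, i, Function.comp_apply]
      rw [if_pos (Dvd.intro _ rfl), nm_mul, Complex.ofReal_mul,
        Complex.mul_cpow_ofReal_nonneg (nm_pos _).le (nm_pos _).le, mul_assoc]
    · rintro ⟨q, I⟩ h
      simp only [hf]
      rw [if_neg, Complex.ofReal_zero, zero_mul]
      rintro ⟨J, rfl⟩
      exact h ⟨(q, J), rfl⟩
  have h3 := (Equiv.prodComm _ _).hasSum_iff.2 h2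
  refine h3.prod_fiberwise fun I => ?_
  simp only [hf, Function.comp_apply, Equiv.prodComm_apply, Prod.swap_prod_mk]
  exact (Complex.hasSum_ofReal.2 (hasSum_lam I)).mul_right _

lemma Zt_differentiableOn_and_deriv {s : ℂ} (hs : 1 < s.re) :
    DifferentiableAt ℂ (Zt K) s ∧ deriv (Zt K) s = -(G0 K s * Zt K s) := by
  set σ := (1 + s.re) / 2 with hσ
  have hσ1 : 1 < σ := by linarith
  have hσ2 : σ < s.re := by linarith
  have hU : IsOpen {w : ℂ | σ < w.re} := isOpen_lt continuous_const Complex.continuous_re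
  have hd : ∀ (I : (Ideal (𝓞 K))⁰) (w : ℂ), HasDerivAt (fun w : ℂ => (nm K I : ℂ) ^ (-w))
      (-((Real.log (nm K I) : ℂ) * (nm K I : ℂ) ^ (-w))) w := by
    intro I w
    have := (hasDerivAt_neg w).const_cpow (c := (nm K I : ℂ))
      (Or.inl (by exact_mod_cast (nm_pos I).ne'))
    convert! this using 1
    rw [Complex.ofReal_log (nm_pos I).le]
    ring
  have hle : ∀ (I : (Ideal (𝓞 K))⁰) (w : ℂ), w ∈ {w : ℂ | σ < w.re} →
      ‖(nm K I : ℂ) ^ (-w)‖ ≤ nm K I ^ (-σ) := by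
    intro I w hw
    rw [norm_nm_cpow]
    have hw' : σ < w.re := hw
    exact Real.rpow_le_rpow_of_exponent_le (one_le_nm I) (by linarith)
  have hdo : ∀ I : (Ideal (𝓞 K))⁰,
      DifferentiableOn ℂ (fun w : ℂ => (nm K I : ℂ) ^ (-w)) {w : ℂ | σ < w.re} :=
    fun I w _ => (hd I w).differentiableAt.differentiableWithinAt
  constructor
  · exact (Complex.differentiableOn_tsum_of_summable_norm (summable_nm K hσ1) hdo hU
      hle).differentiableAt (hU.mem_nhds hσ2)
  · have := Complex.hasSum_deriv_of_summable_norm (summable_nm K hσ1) hdo hU hle hσ2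
    simp_rw [fun I => (hd I s).deriv] at this
    exact this.unique (hasSum_log K hs).neg

end EP2

end PIT



namespace PIT

open MeasureTheory Set Topology

lemma log_deriv_limit {f : ℂ → ℂ} {z₀ : ℂ} (hf : AnalyticAt ℂ f z₀) (hne : ¬ ∀ᶠ z in 𝓝 z₀, f z = 0) :
    ∃ n : ℕ, (n = 0 → f z₀ ≠ 0) ∧ (f z₀ ≠ 0 → n = 0) ∧ (∀ᶠ z in 𝓝[≠] z₀, f z ≠ 0) ∧
      Tendsto (fun z => (z - z₀) * (deriv f z / f z)) (𝓝[≠] z₀) (𝓝 (n : ℂ)) := by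
  obtain ⟨n, g, hg, hg0, hfg⟩ := hf.exists_eventuallyEq_pow_smul_nonzero_iff.2 hne
  have hgne : ∀ᶠ z in 𝓝 z₀, g z ≠ 0 := hg.continuousAt.eventually_ne hg0
  have hz0 := hfg.self_of_nhds
  refine ⟨n, ?_, ?_, ?_, ?_⟩
  · rintro rfl
    simpa [hz0] using hg0
  · intro h
    by_contra hn
    rw [hz0] at h
    simp [hn] at h
  · filter_upwards [eventually_nhdsWithin_of_eventually_nhds hfg,
      eventually_nhdsWithin_of_eventually_nhds hgne, self_mem_nhdsWithin] with z h1 h2 h3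
    rw [h1]
    exact smul_ne_zero (pow_ne_zero _ (sub_ne_zero.2 h3)) h2
  · have hlim : Tendsto (fun z => (n : ℂ) + (z - z₀) * (deriv g z / g z)) (𝓝[≠] z₀) (𝓝 (n : ℂ)) := by
      have hc : ContinuousAt (fun z => (n : ℂ) + (z - z₀) * (deriv g z / g z)) z₀ := by
        have := hg.deriv.continuousAt
        have := hg.continuousAt
        fun_prop (disch := assumption)
      have := hc.tendsto
      simp only [sub_self, zero_mul, add_zero] at this
      exact this.mono_left nhdsWithin_le_nhds
    refine hlim.congr' ?_
    filter_upwards [eventually_nhdsWithin_of_eventually_nhds hfg.eventually_nhds,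
      eventually_nhdsWithin_of_eventually_nhds hgne, self_mem_nhdsWithin,
      eventually_nhdsWithin_of_eventually_nhds hg.eventually_analyticAt] with z h1 h2 h3 h4
    have hzz : z - z₀ ≠ 0 := sub_ne_zero.2 h3
    have hd : HasDerivAt (fun z => (z - z₀) ^ n • g z)
        ((n * (z - z₀) ^ (n - 1) * 1) * g z + (z - z₀) ^ n * deriv g z) z :=
      (((hasDerivAt_id z).sub_const z₀).pow n).mul h4.differentiableAt.hasDerivAt
    have h5 : deriv f z = _ := (Filter.EventuallyEq.deriv_eq h1).trans hd.deriv
    rw [h5, h1.self_of_nhds, smul_eq_mul]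
    rcases Nat.eq_zero_or_pos n with rfl | hn
    · field_simp; simp
    · obtain ⟨m, rfl⟩ := Nat.exists_eq_add_of_lt hn
      simp only [zero_add, Nat.add_sub_cancel]
      field_simp
      ring

section NV

open NumberField IsDedekindDomain

open scoped Classical nonZeroDivisors

variable (K : Type*) [Field K] [NumberField K]

lemma W_logDeriv {δ : ℝ} (hδ : δ < 1) {W : ℂ → ℂ} (hW : DifferentiableOn ℂ W {s | δ < s.re})
    (hWZ : ∀ s : ℂ, 1 < s.re → W s = (s - 1) * Zt K s) {s : ℂ} (hs : 1 < s.re) :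
    deriv W s = W s * ((s - 1)⁻¹ - G0 K s) := by
  have hU : IsOpen {w : ℂ | 1 < w.re} := isOpen_lt continuous_const Complex.continuous_re
  have he : W =ᶠ[𝓝 s] fun s => (s - 1) * Zt K s := by
    filter_upwards [hU.mem_nhds hs] with w hw using hWZ w hw
  obtain ⟨h1, h2⟩ := Zt_differentiableOn_and_deriv K hs
  have hs1 : s - 1 ≠ 0 := by
    intro h
    rw [sub_eq_zero] at h
    rw [h] at hs
    simp at hs
  have := ((hasDerivAt_id s).sub_const 1).mul h1.hasDerivAt
  rw [he.deriv_eq]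
  have h3 : deriv (fun s => (s - 1) * Zt K s) s = _ := this.deriv
  rw [h3, h2, hWZ s hs]
  simp only [id_eq]
  field_simp
  ring

lemma norm_G0_le {s : ℂ} {σ : ℝ} (hσ : 1 < σ) (hs : σ ≤ s.re) :
    ‖G0 K s‖ ≤ ∑' q : HeightOneSpectrum (𝓞 K) × ℕ, Real.log (np K q.1) * nm K (ppow q) ^ (-σ) := by
  refine (norm_tsum_le_tsum_norm (summable_norm_G0 K (lt_of_lt_of_le hσ hs))).trans ?_
  refine (summable_norm_G0 K (lt_of_lt_of_le hσ hs)).tsum_le_tsum (fun q => ?_) (summable_lam K hσ)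
  rw [norm_mul, norm_nm_cpow, Complex.norm_real, Real.norm_of_nonneg (log_np_nonneg _)]
  exact mul_le_mul_of_nonneg_left (Real.rpow_le_rpow_of_exponent_le (one_le_nm _) (by linarith))
    (log_np_nonneg _)

lemma G0_re_nonneg {σ : ℝ} (hσ : 1 < σ) (t : ℝ) :
    0 ≤ (3 * G0 K σ + 4 * G0 K (σ + t * Complex.I) + G0 K (σ + 2 * t * Complex.I)).re := by
  have e : ∀ t : ℝ, 1 < ((σ : ℂ) + t * Complex.I).re := by intro t; simp [hσ]
  have h0 := (summable_norm_G0 K (e 0)).of_norm.hasSum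
  have h1 := (summable_norm_G0 K (e t)).of_norm.hasSum
  have h2 := (summable_norm_G0 K (e (2 * t))).of_norm.hasSum
  have h := ((h0.mul_left 3).add (h1.mul_left 4)).add h2
  push_cast at h
  rw [zero_mul, add_zero] at h
  have h' := Complex.hasSum_re h
  refine h'.nonneg fun q => ?_
  set N := nm K (ppow q) with hN
  have hN0 : 0 < N := nm_pos _
  have hNc : (N : ℂ) ≠ 0 := by exact_mod_cast hN0.ne'
  have hc : ∀ u : ℝ, ((N : ℂ) ^ (-((σ : ℂ) + u * Complex.I))).re =
      N ^ (-σ) * Real.cos (u * Real.log N) := by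
    intro u
    rw [neg_add, Complex.cpow_add _ _ hNc, ← Complex.ofReal_neg, ← Complex.ofReal_cpow hN0.le,
      Complex.re_ofReal_mul, Complex.cpow_def_of_ne_zero hNc, ← Complex.ofReal_log hN0.le]
    rw [show (Real.log N : ℂ) * -(u * Complex.I) = ((-(u * Real.log N) : ℝ) : ℂ) * Complex.I by
      push_cast; ring, Complex.exp_ofReal_mul_I_re, Real.cos_neg]
  have hc0 := hc 0
  have hc1 := hc t
  have hc2 := hc (2 * t)
  rw [Complex.ofReal_zero, zero_mul, zero_mul, add_zero, Real.cos_zero] at hc0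
  push_cast at hc2
  have e3 : ∀ z : ℂ, ((3 : ℂ) * z).re = 3 * z.re := by intro z; simp
  have e4 : ∀ z : ℂ, ((4 : ℂ) * z).re = 4 * z.re := by intro z; simp
  rw [Complex.add_re, Complex.add_re, e3, e4, Complex.re_ofReal_mul, Complex.re_ofReal_mul,
    Complex.re_ofReal_mul, hc0, hc1, hc2, mul_assoc 2 t, Real.cos_two_mul]
  have hL := log_np_nonneg q.1
  have hp : 0 ≤ N ^ (-σ) := Real.rpow_nonneg hN0.le _
  have : 0 ≤ Real.log (np K q.1) * N ^ (-σ) * (2 * (1 + Real.cos (t * Real.log N)) ^ 2) := by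
    positivity
  linarith

theorem W_ne_zero {δ : ℝ} (hδ : δ < 1) {W : ℂ → ℂ} (hW : DifferentiableOn ℂ W {s | δ < s.re})
    (hW1 : W 1 ≠ 0) (hWZ : ∀ s : ℂ, 1 < s.re → W s = (s - 1) * Zt K s) {s : ℂ} (hs : 1 ≤ s.re) :
    W s ≠ 0 := by
  have hU : IsOpen {w : ℂ | δ < w.re} := isOpen_lt continuous_const Complex.continuous_re
  have hWan : AnalyticOnNhd ℂ W {w : ℂ | δ < w.re} := hW.analyticOnNhd hU
  have hconn : IsPreconnected {w : ℂ | δ < w.re} := (convex_halfSpace_re_gt δ).isPreconnected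
  have hne : ∀ z : ℂ, 1 ≤ z.re → ¬ ∀ᶠ w in 𝓝 z, W w = 0 := by
    intro z hz h
    have := hWan.eqOn_zero_of_preconnected_of_eventuallyEq_zero hconn
      (show z ∈ {w : ℂ | δ < w.re} from lt_of_lt_of_le hδ hz) h
    exact hW1 (this (show (1:ℂ) ∈ {w : ℂ | δ < w.re} by simpa using hδ))
  -- limits
  have key : ∀ z : ℂ, 1 ≤ z.re → ∃ n : ℕ, (n = 0 → W z ≠ 0) ∧ (W z ≠ 0 → n = 0) ∧
      Tendsto (fun ε : ℝ => (ε : ℂ) * (((z + ε) - 1)⁻¹ - G0 K (z + ε))) (𝓝[>] 0) (𝓝 (n : ℂ)) := by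
    intro z hz
    obtain ⟨n, h1, h2, h3, h4⟩ := log_deriv_limit
      (hWan z (show z ∈ {w : ℂ | δ < w.re} from lt_of_lt_of_le hδ hz)) (hne z hz)
    refine ⟨n, h1, h2, ?_⟩
    have ht : Tendsto (fun ε : ℝ => z + (ε : ℂ)) (𝓝[>] 0) (𝓝[≠] z) := by
      rw [tendsto_nhdsWithin_iff]
      constructor
      · have : ContinuousAt (fun ε : ℝ => z + (ε : ℂ)) 0 := by fun_prop
        have := this.tendsto
        simp only [Complex.ofReal_zero, add_zero] at this
        exact this.mono_left nhdsWithin_le_nhds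
      · filter_upwards [self_mem_nhdsWithin] with ε hε
        have : (0:ℝ) < ε := hε
        simp [this.ne']
    refine (h4.comp ht).congr' ?_
    filter_upwards [self_mem_nhdsWithin, ht.eventually h3] with ε hε hne0
    have hε' : (0:ℝ) < ε := hε
    simp only [Function.comp_apply, add_sub_cancel_left]
    rw [W_logDeriv K hδ hW hWZ (by simp; linarith), mul_div_cancel_left₀ _ hne0]
  have hz1 : ∀ z : ℂ, z ≠ 1 → Tendsto (fun ε : ℝ => (ε : ℂ) * ((z + ε) - 1)⁻¹) (𝓝[>] 0) (𝓝 0) := by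
    intro z hz
    have : ContinuousAt (fun ε : ℝ => (ε : ℂ) * ((z + ε) - 1)⁻¹) 0 := by
      have : z + ((0:ℝ) : ℂ) - 1 ≠ 0 := by simpa [sub_eq_zero] using hz
      fun_prop (disch := assumption)
    have := this.tendsto
    simp only [Complex.ofReal_zero, zero_mul] at this
    exact this.mono_left nhdsWithin_le_nhds
  have keyG : ∀ z : ℂ, z ≠ 1 → 1 ≤ z.re → ∃ n : ℕ, (n = 0 → W z ≠ 0) ∧
      Tendsto (fun ε : ℝ => (ε : ℂ) * G0 K (z + ε)) (𝓝[>] 0) (𝓝 (-(n : ℂ))) := by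
    intro z hz hz'
    obtain ⟨n, h1, -, h2⟩ := key z hz'
    refine ⟨n, h1, ?_⟩
    have := (hz1 z hz).sub h2
    rw [zero_sub] at this
    refine this.congr fun ε => ?_
    ring
  have key1 : Tendsto (fun ε : ℝ => (ε : ℂ) * G0 K (1 + ε)) (𝓝[>] 0) (𝓝 1) := by
    obtain ⟨n, -, h1, h2⟩ := key 1 (by simp)
    rw [h1 hW1] at h2
    have := (tendsto_const_nhds (x := (1:ℂ))).sub h2
    simp only [Nat.cast_zero, sub_zero] at this
    refine this.congr' ?_
    filter_upwards [self_mem_nhdsWithin] with ε hε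
    have hε' : (0:ℝ) < ε := hε
    have : (ε : ℂ) ≠ 0 := by exact_mod_cast hε'.ne'
    rw [add_sub_cancel_left]
    field_simp
    ring
  by_cases hs1 : s = 1
  · rwa [hs1]
  rcases hs.lt_or_eq with hlt | heq
  · obtain ⟨n, h1, h2⟩ := keyG s hs1 hs
    apply h1
    have h3 : Tendsto (fun ε : ℝ => (ε : ℂ) * G0 K (s + ε)) (𝓝[>] 0) (𝓝 0) := by
      set C := ∑' q : HeightOneSpectrum (𝓞 K) × ℕ, Real.log (np K q.1) * nm K (ppow q) ^ (-s.re)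
      have hC : Tendsto (fun ε : ℝ => ε * C) (𝓝[>] 0) (𝓝 0) := by
        have : ContinuousAt (fun ε : ℝ => ε * C) 0 := by fun_prop
        have := this.tendsto
        rw [zero_mul] at this
        exact this.mono_left nhdsWithin_le_nhds
      apply squeeze_zero_norm' _ hC
      filter_upwards [self_mem_nhdsWithin] with ε hε
      have hε' : (0:ℝ) < ε := hε
      rw [norm_mul, Complex.norm_real, Real.norm_of_nonneg hε'.le]
      apply mul_le_mul_of_nonneg_left _ hε'.le
      exact norm_G0_le K hlt (by simp; exact hε'.le)
    have := tendsto_nhds_unique h2 h3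
    simpa using this
  · set t := s.im with ht
    have hst : s = 1 + t * Complex.I := by
      apply Complex.ext <;> simp [ht, heq.symm]
    have ht0 : t ≠ 0 := by
      intro h; rw [h] at hst; simp at hst; exact hs1 hst
    obtain ⟨n, h1, h2⟩ := keyG s hs1 hs
    obtain ⟨m, -, h3⟩ := keyG (1 + 2 * t * Complex.I) (by
      intro h
      have := congrArg Complex.im h
      simp at this
      exact ht0 this) (by simp)
    apply h1
    have h4 := ((key1.const_mul 3).add (h2.const_mul 4)).add h3
    have h5 := (Complex.continuous_re.tendsto _).comp h4
    have h6 : 0 ≤ (3 * 1 + 4 * -(n:ℂ) + -(m : ℂ)).re := by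
      apply ge_of_tendsto h5
      filter_upwards [self_mem_nhdsWithin] with ε hε
      have hε' : (0:ℝ) < ε := hε
      simp only [Function.comp_apply]
      have := G0_re_nonneg K (σ := 1 + ε) (by linarith) t
      have h7 : 3 * ((ε:ℂ) * G0 K (1 + ε)) + 4 * (ε * G0 K (s + ε)) +
          ε * G0 K (1 + 2 * t * Complex.I + ε) = (ε : ℂ) * (3 * G0 K ((1 + ε : ℝ) : ℂ) +
            4 * G0 K ((1 + ε : ℝ) + t * Complex.I) + G0 K ((1 + ε : ℝ) + 2 * t * Complex.I)) := by
        rw [hst]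
        push_cast
        rw [show (1 + (t:ℂ) * Complex.I + ε) = 1 + ε + t * Complex.I by ring,
          show (1 + 2 * (t:ℂ) * Complex.I + ε) = 1 + ε + 2 * t * Complex.I by ring]
        ring
      rw [h7, Complex.re_ofReal_mul]
      exact mul_nonneg hε'.le this
    have h8 : (3 * 1 + 4 * -(n:ℂ) + -(m : ℂ)).re = 3 - 4 * (n:ℝ) - m := by
      simp; ring
    rw [h8] at h6
    by_contra hn
    have : (1:ℝ) ≤ n := by exact_mod_cast Nat.one_le_iff_ne_zero.2 hn
    have : (0:ℝ) ≤ m := Nat.cast_nonneg _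
    linarith

end NV

end PIT



namespace PIT

open MeasureTheory Set Topology

section TH

open NumberField IsDedekindDomain

open scoped Classical nonZeroDivisors

variable (K : Type*) [Field K] [NumberField K]

lemma finite_np_le (x : ℝ) : {P : HeightOneSpectrum (𝓞 K) | np K P ≤ x}.Finite := by
  have : ((fun P : HeightOneSpectrum (𝓞 K) => ppow (P, 0)) ⁻¹'
      {J : (Ideal (𝓞 K))⁰ | nm K J ≤ x}).Finite :=
    (finite_nm_le K _).preimage (by
      intro P _ Q _ h
      have := ppow_injective h
      simpa using this)
  refine this.subset fun P hP => ?_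
  show nm K (ppow (P, 0)) ≤ x
  rw [nm_ppow]
  simpa using hP

/-- Chebyshev theta function of `K`. -/
noncomputable def theta (x : ℝ) : ℝ := ∑ P ∈ (finite_np_le K x).toFinset, Real.log (np K P)

lemma theta_mono {x y : ℝ} (h : x ≤ y) : theta K x ≤ theta K y := by
  apply Finset.sum_le_sum_of_subset_of_nonneg
  · intro P hP
    simp only [Finite.mem_toFinset] at hP ⊢
    exact le_trans hP h
  · intro P _ _
    exact log_np_nonneg P

lemma theta_nonneg (x : ℝ) : 0 ≤ theta K x := Finset.sum_nonneg fun P _ => log_np_nonneg P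

lemma absNorm_span_nat (n : ℕ) :
    Ideal.absNorm (Ideal.span {(n:𝓞 K)}) = n ^ Module.finrank ℚ K := by
  rw [Ideal.absNorm_span_singleton]
  have := Algebra.norm_algebraMap (S := 𝓞 K) (n:ℤ)
  simp only [map_natCast] at this
  rw [this, Int.natAbs_pow, RingOfIntegers.rank]
  simp

lemma theta_le (x : ℝ) (hx : 0 ≤ x) : theta K x ≤ Module.finrank ℚ K * Real.log 4 * x := by
  set S := (finite_np_le K x).toFinset with hS
  have hinj : Function.Injective (fun P : HeightOneSpectrum (𝓞 K) => P.asIdeal) :=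
    fun P Q h => HeightOneSpectrum.ext h
  have hd : ∏ I ∈ S.image (fun P => P.asIdeal), I ∣
      Ideal.span {(primorial ⌊x⌋₊ : 𝓞 K)} := by
    apply Finset.prod_primes_dvd
    · intro I hI
      obtain ⟨P, -, rfl⟩ := Finset.mem_image.1 hI
      exact P.prime
    · intro I hI
      obtain ⟨P, hP, rfl⟩ := Finset.mem_image.1 hI
      rw [Ideal.dvd_span_singleton]
      have hPx : np K P ≤ x := by simpa [hS] using hP
      have hmem := Ideal.absNorm_mem P.asIdeal
      have h0 : Ideal.absNorm P.asIdeal ≠ 0 := by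
        rw [Ne, Ideal.absNorm_eq_zero_iff]; exact P.ne_bot
      rw [← Nat.prod_primeFactorsList h0, Nat.cast_list_prod, ← Multiset.prod_coe,
        P.isPrime.multiset_prod_mem_iff_exists_mem] at hmem
      obtain ⟨a, ha, haP⟩ := hmem
      rw [Multiset.mem_coe, List.mem_map] at ha
      obtain ⟨p, hp, rfl⟩ := ha
      have hp1 := Nat.prime_of_mem_primeFactorsList hp
      have hp2 : p ≤ ⌊x⌋₊ := by
        refine (Nat.le_of_mem_primeFactorsList hp).trans ?_
        exact Nat.le_floor hPx
      have hpd : p ∣ primorial ⌊x⌋₊ := by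
        apply Finset.dvd_prod_of_mem (fun p => p)
        rw [Finset.mem_filter, Finset.mem_range]
        exact ⟨by omega, hp1⟩
      obtain ⟨c, hc⟩ := hpd
      rw [hc]
      push_cast
      exact Ideal.mul_mem_right _ _ haP
  have h2 := Ideal.absNorm_dvd_absNorm_of_le (Ideal.dvd_iff_le.1 hd)
  rw [absNorm_span_nat, Finset.prod_image hinj.injOn, map_prod] at h2
  have hpp : 0 < primorial ⌊x⌋₊ := primorial_pos _
  have h3 : (∏ P ∈ S, np K P) ≤ (primorial ⌊x⌋₊ : ℝ) ^ Module.finrank ℚ K := by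
    have := Nat.le_of_dvd (by positivity) h2
    unfold np
    exact_mod_cast this
  have h4 : theta K x ≤ Real.log ((primorial ⌊x⌋₊ : ℝ) ^ Module.finrank ℚ K) := by
    unfold theta
    rw [← Real.log_prod (fun P _ => by linarith [two_le_np P])]
    apply Real.log_le_log _ h3
    exact Finset.prod_pos fun P _ => by linarith [two_le_np P]
  refine h4.trans ?_
  rw [Real.log_pow, mul_assoc]
  apply mul_le_mul_of_nonneg_left _ (Nat.cast_nonneg _)
  have h5 : (primorial ⌊x⌋₊ : ℝ) ≤ 4 ^ ⌊x⌋₊ := by exact_mod_cast primorial_le_four_pow _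
  calc Real.log (primorial ⌊x⌋₊ : ℝ) ≤ Real.log (4 ^ ⌊x⌋₊) :=
        Real.log_le_log (by exact_mod_cast hpp) h5
    _ = ⌊x⌋₊ * Real.log 4 := by rw [Real.log_pow]
    _ ≤ x * Real.log 4 := by
      apply mul_le_mul_of_nonneg_right (Nat.floor_le hx) (Real.log_nonneg (by norm_num))
    _ = _ := mul_comm _ _

/-- Sum over primes. -/
noncomputable def G1 (s : ℂ) : ℂ := ∑' P : HeightOneSpectrum (𝓞 K),
  (Real.log (np K P) : ℂ) * (np K P : ℂ) ^ (-s)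

/-- Higher prime powers. -/
noncomputable def Rs (s : ℂ) : ℂ := ∑' q : HeightOneSpectrum (𝓞 K) × ℕ,
  (Real.log (np K q.1) : ℂ) * (nm K (ppow (q.1, q.2 + 1)) : ℂ) ^ (-s)

variable {K} in
lemma np_pos (P : HeightOneSpectrum (𝓞 K)) : 0 < np K P := by linarith [two_le_np P]

lemma summable_np {σ : ℝ} (hσ : 1 < σ) :
    Summable fun P : HeightOneSpectrum (𝓞 K) => Real.log (np K P) * np K P ^ (-σ) := by
  have := (summable_lam K hσ).comp_injective (i := fun P : HeightOneSpectrum (𝓞 K) => (P, 0))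
    (fun P Q h => by simpa using h)
  refine this.congr fun P => ?_
  simp [nm_ppow]

lemma Rs_continuousOn : ContinuousOn (Rs K) {s | 1 ≤ s.re} := by
  have hs1 := summable_np K (σ := 2) (by norm_num)
  have hs2 : Summable fun k : ℕ => ((1:ℝ)/2) ^ k := summable_geometric_two
  have hs := hs1.mul_of_nonneg hs2 (fun P => mul_nonneg (log_np_nonneg P)
    (Real.rpow_nonneg (np_pos P).le _)) (fun k => by positivity)
  unfold Rs
  refine continuousOn_tsum (fun q => ?_) hs (fun q s hs => ?_)
  · apply Continuous.continuousOn
    have : ((nm K (ppow (q.1, q.2 + 1)) : ℝ) : ℂ) ≠ 0 := by exact_mod_cast (nm_pos _).ne'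
    exact continuous_const.mul (continuous_neg.const_cpow (Or.inl this))
  · have hs' : 1 ≤ s.re := hs
    rw [norm_mul, norm_nm_cpow, Complex.norm_real, Real.norm_of_nonneg (log_np_nonneg _), mul_assoc]
    apply mul_le_mul_of_nonneg_left _ (log_np_nonneg _)
    have hN := two_le_np q.1
    calc nm K (ppow (q.1, q.2 + 1)) ^ (-s.re) ≤ nm K (ppow (q.1, q.2 + 1)) ^ (-1 : ℝ) :=
          Real.rpow_le_rpow_of_exponent_le (one_le_nm _) (by linarith)
      _ = (np K q.1 ^ 2)⁻¹ * (np K q.1 ^ q.2)⁻¹ := by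
        rw [Real.rpow_neg_one, nm_ppow, ← mul_inv, ← pow_add]
        congr 2; ring
      _ ≤ np K q.1 ^ (-2 : ℝ) * (1/2) ^ q.2 := by
        rw [Real.rpow_neg (np_pos _).le]
        have : np K q.1 ^ (2:ℝ) = np K q.1 ^ 2 := by norm_cast
        rw [this, one_div, inv_pow]
        apply mul_le_mul_of_nonneg_left _ (by positivity)
        gcongr

lemma G0_eq {s : ℂ} (hs : 1 < s.re) : G0 K s = G1 K s + Rs K s := by
  have h := (summable_norm_G0 K hs).of_norm
  have hR : Summable fun q : HeightOneSpectrum (𝓞 K) × ℕ =>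
      (Real.log (np K q.1) : ℂ) * (nm K (ppow (q.1, q.2 + 1)) : ℂ) ^ (-s) :=
    h.comp_injective (i := fun q : HeightOneSpectrum (𝓞 K) × ℕ => (q.1, q.2 + 1)) (by
      rintro ⟨P, k⟩ ⟨Q, m⟩ h
      simpa using h)
  have h1 : Summable fun P : HeightOneSpectrum (𝓞 K) =>
      (Real.log (np K P) : ℂ) * (np K P : ℂ) ^ (-s) := by
    have := h.comp_injective (i := fun P : HeightOneSpectrum (𝓞 K) => (P, 0))
      (fun P Q h => by simpa using h)
    refine this.congr fun P => ?_
    simp [nm_ppow]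
  unfold G0 G1 Rs
  rw [h.tsum_prod, hR.tsum_prod, ← h1.tsum_add hR.prod]
  refine tsum_congr fun P => ?_
  rw [(h.prod_factor P).tsum_eq_zero_add]
  simp [nm_ppow]

theorem exists_h : ∃ h : ℂ → ℂ, ContinuousOn h {s | 1 ≤ s.re} ∧
    ∀ s : ℂ, 1 < s.re → h s = G1 K s - (s - 1)⁻¹ := by
  obtain ⟨δ, hδ, W, hW, hW1, hWZ⟩ := zeta_continuation K
  have hU : IsOpen {w : ℂ | δ < w.re} := isOpen_lt continuous_const Complex.continuous_re
  have hsub : {s : ℂ | 1 ≤ s.re} ⊆ {w : ℂ | δ < w.re} := fun s hs => lt_of_lt_of_le hδ hs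
  refine ⟨fun s => - (deriv W s / W s) - Rs K s, ?_, ?_⟩
  · refine ContinuousOn.sub (ContinuousOn.neg (ContinuousOn.div ?_ ?_ ?_)) (Rs_continuousOn K)
    · exact ((hW.analyticOnNhd hU).deriv.continuousOn).mono hsub
    · exact hW.continuousOn.mono hsub
    · intro s hs
      exact W_ne_zero K hδ hW hW1 hWZ hs
  · intro s hs
    beta_reduce
    rw [W_logDeriv K hδ hW hWZ hs, mul_div_cancel_left₀ _ (W_ne_zero K hδ hW hW1 hWZ hs.le),
      G0_eq K hs]
    ring

end TH

end PIT



namespace PIT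

open MeasureTheory Set Topology

section TH2

open NumberField IsDedekindDomain

open scoped Classical nonZeroDivisors

variable (K : Type*) [Field K] [NumberField K]

instance countable_hos : Countable (HeightOneSpectrum (𝓞 K)) := by
  have hinj : Function.Injective (fun P : HeightOneSpectrum (𝓞 K) => ppow (P, 0)) :=
    fun P Q h => by simpa using ppow_injective h
  exact hinj.countable

lemma theta_tsum (v : ℝ) : theta K (Real.exp v) =
    ∑' P : HeightOneSpectrum (𝓞 K), (Ici (Real.log (np K P))).indicator
      (fun _ => Real.log (np K P)) v := by
  rw [tsum_eq_sum (s := (finite_np_le K (Real.exp v)).toFinset)]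
  · unfold theta
    refine Finset.sum_congr rfl fun P hP => ?_
    rw [indicator_of_mem]
    rw [Finite.mem_toFinset] at hP
    rw [mem_Ici, Real.log_le_iff_le_exp (np_pos P)]
    exact hP
  · intro P hP
    rw [indicator_of_notMem]
    rw [Finite.mem_toFinset] at hP
    rw [mem_Ici, Real.log_le_iff_le_exp (np_pos P)]
    exact hP

lemma exp_log_np (P : HeightOneSpectrum (𝓞 K)) (s : ℂ) :
    Complex.exp (-s * (Real.log (np K P) : ℝ)) = (np K P : ℂ) ^ (-s) := by
  have : (np K P : ℂ) ≠ 0 := by exact_mod_cast (np_pos P).ne'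
  rw [Complex.cpow_def_of_ne_zero this, ← Complex.ofReal_log (np_pos P).le, mul_comm]

lemma laplace_theta {s : ℂ} (hs : 1 < s.re) :
    ∫ v in Ioi (0:ℝ), (theta K (Real.exp v) : ℂ) * Complex.exp (-s * v) = G1 K s / s := by
  have hs0 : s ≠ 0 := by
    rintro rfl; simp at hs; linarith
  set F : HeightOneSpectrum (𝓞 K) → ℝ → ℂ := fun P => (Ici (Real.log (np K P))).indicator
      (fun v => (Real.log (np K P) : ℂ) * Complex.exp (-s * v)) with hF
  have hIci : ∀ P : HeightOneSpectrum (𝓞 K), Ici (Real.log (np K P)) ⊆ Ioi 0 := by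
    intro P v hv
    exact lt_of_lt_of_le (Real.log_pos (by linarith [two_le_np P])) hv
  have hre : (-s).re < 0 := by simp; linarith
  have hFint : ∀ P : HeightOneSpectrum (𝓞 K), IntegrableOn
      (fun v : ℝ => (Real.log (np K P) : ℂ) * Complex.exp (-s * v)) (Ici (Real.log (np K P))) := by
    intro P
    rw [integrableOn_Ici_iff_integrableOn_Ioi]
    exact (integrableOn_exp_mul_complex_Ioi hre _).const_mul _
  have h1 : ∀ P, Integrable (F P) (volume.restrict (Ioi 0)) := by
    intro P
    exact ((hFint P).integrable_indicator measurableSet_Ici).integrableOn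
  have hset : ∀ (P : HeightOneSpectrum (𝓞 K)) {E : Type} [NormedAddCommGroup E] [NormedSpace ℝ E] (f : ℝ → E),
      ∫ v in Ioi (0:ℝ), (Ici (Real.log (np K P))).indicator f v =
        ∫ v in Ioi (Real.log (np K P)), f v := by
    intro P E _ _ f
    rw [setIntegral_indicator measurableSet_Ici, inter_eq_self_of_subset_right (hIci P),
      integral_Ici_eq_integral_Ioi]
  have h2 : ∀ P, ∫ v in Ioi (0:ℝ), F P v = (Real.log (np K P) : ℂ) * (np K P : ℂ) ^ (-s) / s := by
    intro P
    simp only [hF]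
    rw [hset, integral_const_mul, integral_exp_mul_complex_Ioi hre, exp_log_np]
    field_simp
  have h3 : ∀ P, ∫ v in Ioi (0:ℝ), ‖F P v‖ = Real.log (np K P) * np K P ^ (-s.re) / s.re := by
    intro P
    simp only [hF, norm_indicator_eq_indicator_norm]
    rw [hset]
    have : ∀ v : ℝ, ‖(Real.log (np K P) : ℂ) * Complex.exp (-s * v)‖ =
        Real.log (np K P) * Real.exp (-s.re * v) := by
      intro v
      rw [norm_mul, Complex.norm_real, Real.norm_of_nonneg (log_np_nonneg P), Complex.norm_exp]
      simp
    simp_rw [this]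
    rw [integral_const_mul, integral_exp_mul_Ioi (by linarith), Real.rpow_def_of_pos (np_pos P),
      mul_comm (Real.log (np K P)) (-s.re)]
    have : s.re ≠ 0 := by linarith
    field_simp
  have h4 := hasSum_integral_of_summable_integral_norm h1 (by
    simp_rw [h3]
    exact (summable_np K hs).div_const _)
  simp_rw [h2] at h4
  have h5 : ∀ v : ℝ, ∑' P, F P v = (theta K (Real.exp v) : ℂ) * Complex.exp (-s * v) := by
    intro v
    rw [theta_tsum, Complex.ofReal_tsum, ← tsum_mul_right]
    refine tsum_congr fun P => ?_
    simp only [hF, indicator]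
    split_ifs <;> simp
  simp_rw [h5] at h4
  rw [← h4.tsum_eq, tsum_div_const]
  rfl

theorem theta_asymp : Tendsto (fun u : ℝ => theta K (Real.exp u) * Real.exp (-u)) atTop (𝓝 1) := by
  obtain ⟨h, hc, hh⟩ := exists_h K
  set C : ℝ := Module.finrank ℚ K * Real.log 4 with hC
  have hmeas : Measurable fun u : ℝ => theta K (Real.exp u) * Real.exp (-u) := by
    apply Measurable.mul
    · exact Monotone.measurable fun u v huv => theta_mono K (Real.exp_le_exp.2 huv)
    · fun_prop
  have hnn : ∀ u : ℝ, 0 ≤ theta K (Real.exp u) * Real.exp (-u) := fun u =>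
    mul_nonneg (theta_nonneg K _) (Real.exp_pos _).le
  have hB : ∀ u : ℝ, theta K (Real.exp u) * Real.exp (-u) ≤ C := by
    intro u
    rw [Real.exp_neg, ← div_eq_mul_inv, div_le_iff₀ (Real.exp_pos u)]
    exact theta_le K _ (Real.exp_pos u).le
  refine tauber _ hmeas hnn C hB ?_ (fun s => (h (s + 1) - 1) / (s + 1)) ?_ ?_
  · intro u v huv
    have : ∀ u : ℝ, Real.exp u * (theta K (Real.exp u) * Real.exp (-u)) = theta K (Real.exp u) := by
      intro u
      rw [Real.exp_neg]
      field_simp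
    rw [this, this]
    exact theta_mono K (Real.exp_le_exp.2 huv)
  · have hmaps : MapsTo (fun s : ℂ => s + 1) {s | 0 ≤ s.re} {s | 1 ≤ s.re} := by
      intro s hs
      have : 0 ≤ s.re := hs
      show 1 ≤ (s + 1).re
      simp [this]
    refine ContinuousOn.div ((hc.comp (by fun_prop) hmaps).sub continuousOn_const) (by fun_prop) ?_
    intro s hs h0
    have : 0 ≤ s.re := hs
    have := congrArg Complex.re h0
    simp at this
    linarith
  · intro s hs
    have hs0 : s ≠ 0 := by rintro rfl; simp at hs
    have hs1 : s + 1 ≠ 0 := by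
      intro h0
      have := congrArg Complex.re h0
      simp at this
      linarith
    have hre : (-s).re < 0 := by simpa using hs
    have hI := integrableOn_exp_mul_complex_Ioi hre 0
    have hI2 : IntegrableOn (fun v : ℝ => ((theta K (Real.exp v) * Real.exp (-v) : ℝ) : ℂ) *
        Complex.exp (-s * v)) (Ioi 0) := by
      refine Integrable.bdd_mul (c := C) hI ?_ ?_
      · exact (Complex.measurable_ofReal.comp hmeas).aestronglyMeasurable
      · refine Eventually.of_forall fun v => ?_
        rw [Complex.norm_real, Real.norm_of_nonneg (hnn v)]
        exact hB v
    have e1 : ∀ v : ℝ, ((theta K (Real.exp v) * Real.exp (-v) - 1 : ℝ) : ℂ) * Complex.exp (-s * v) =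
        ((theta K (Real.exp v) * Real.exp (-v) : ℝ) : ℂ) * Complex.exp (-s * v) -
          Complex.exp (-s * v) := by
      intro v; push_cast; ring
    simp_rw [e1]
    rw [integral_sub hI2 hI, integral_exp_mul_complex_Ioi hre]
    have e2 : ∀ v : ℝ, ((theta K (Real.exp v) * Real.exp (-v) : ℝ) : ℂ) * Complex.exp (-s * v) =
        (theta K (Real.exp v) : ℂ) * Complex.exp (-(s + 1) * v) := by
      intro v
      push_cast
      rw [mul_assoc, ← Complex.exp_add]
      congr 2; ring
    simp_rw [e2]
    have h1s : 1 < (s + 1).re := by simp [hs]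
    rw [laplace_theta K h1s, hh _ h1s, add_sub_cancel_right]
    simp
    field_simp
    ring

end TH2

end PIT



namespace PIT

open MeasureTheory Set Topology

lemma li_asymp : Tendsto (fun x : ℝ => (∫ t in (2:ℝ)..x, 1 / Real.log t) * Real.log x / x)
    atTop (𝓝 1) := by
  have hlx : Tendsto (fun x : ℝ => Real.log x / x) atTop (𝓝 0) := by
    have := (isLittleO_log_rpow_atTop (r := 1) one_pos).tendsto_div_nhds_zero
    simpa using this
  have hlinv : Tendsto (fun x : ℝ => 1 / Real.log x) atTop (𝓝 0) := by
    simp only [one_div]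
    exact Real.tendsto_log_atTop.inv_tendsto_atTop
  have hO := Chebyshev.integral_one_div_log_sq_isBigO
  have hO2 : Tendsto (fun x : ℝ => (∫ t in (2:ℝ)..x, 1 / Real.log t ^ 2) * (Real.log x / x))
      atTop (𝓝 0) := by
    have h1 := hO.mul (Asymptotics.isBigO_refl (fun x : ℝ => Real.log x / x) atTop)
    refine Asymptotics.IsBigO.trans_tendsto h1 ?_
    refine hlinv.congr' ?_
    filter_upwards [eventually_gt_atTop 1] with x hx
    have := Real.log_pos hx
    field_simp
  have hlim : Tendsto (fun x : ℝ => 1 - (2 / Real.log 2) * (Real.log x / x) +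
      (∫ t in (2:ℝ)..x, 1 / Real.log t ^ 2) * (Real.log x / x)) atTop (𝓝 1) := by
    have := ((tendsto_const_nhds (x := (1:ℝ))).sub (hlx.const_mul (2 / Real.log 2))).add hO2
    simpa using this
  refine hlim.congr' ?_
  filter_upwards [eventually_ge_atTop 2] with x hx
  have hI2 := Chebyshev.intervalIntegrable_one_div_log_sq (a := 2) (b := x) (by norm_num) (by linarith)
  have hI1 : IntervalIntegrable (fun t => 1 / Real.log t) volume 2 x := by
    apply ContinuousOn.intervalIntegrable
    intro t ht
    rw [uIcc_of_le hx] at ht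
    have : Real.log t ≠ 0 := (Real.log_pos (by linarith [ht.1])).ne'
    have h0 : t ≠ 0 := by linarith [ht.1]
    apply ContinuousAt.continuousWithinAt
    fun_prop (disch := assumption)
  have hFTC : ∫ t in (2:ℝ)..x, (1 / Real.log t - 1 / Real.log t ^ 2) =
      x / Real.log x - 2 / Real.log 2 := by
    apply intervalIntegral.integral_eq_sub_of_hasDerivAt (f := fun t => t / Real.log t)
    · intro t ht
      rw [uIcc_of_le hx] at ht
      have hl : Real.log t ≠ 0 := (Real.log_pos (by linarith [ht.1])).ne'
      have h0 : t ≠ 0 := by linarith [ht.1]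
      have := (hasDerivAt_id t).div (Real.hasDerivAt_log h0) hl
      convert! this using 1
      simp only [id_eq]
      field_simp
    · exact hI1.sub hI2
  rw [intervalIntegral.integral_sub hI1 hI2] at hFTC
  have h3 : ∫ t in (2:ℝ)..x, 1 / Real.log t = x / Real.log x - 2 / Real.log 2 +
      ∫ t in (2:ℝ)..x, 1 / Real.log t ^ 2 := by linarith
  rw [h3]
  have hl : Real.log x ≠ 0 := (Real.log_pos (by linarith)).ne'
  have h0 : x ≠ 0 := by linarith
  field_simp

section PiK

open NumberField IsDedekindDomain

variable (K : Type*) [Field K] [NumberField K]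

/-- Prime counting function of `K`. -/
noncomputable def piK (x : ℝ) : ℝ := (finite_np_le K x).toFinset.card

lemma theta_tendsto : Tendsto (fun x : ℝ => theta K x / x) atTop (𝓝 1) := by
  refine ((theta_asymp K).comp Real.tendsto_log_atTop).congr' ?_
  filter_upwards [eventually_gt_atTop 0] with x hx
  simp only [Function.comp_apply]
  rw [Real.exp_neg, Real.exp_log hx, div_eq_mul_inv]

lemma theta_le_piK {x : ℝ} : theta K x ≤ piK K x * Real.log x := by
  unfold theta piK
  rw [← nsmul_eq_mul]
  apply Finset.sum_le_card_nsmul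
  intro P hP
  rw [Finite.mem_toFinset] at hP
  exact Real.log_le_log (np_pos P) hP

lemma piK_le {x : ℝ} (hx : 0 ≤ x) : piK K x ≤ (Module.finrank ℚ K * Real.log 4 / Real.log 2) * x := by
  have h2 : 0 < Real.log 2 := Real.log_pos one_lt_two
  rw [div_mul_eq_mul_div, le_div_iff₀ h2]
  refine le_trans ?_ (theta_le K x hx)
  unfold theta piK
  rw [← nsmul_eq_mul]
  apply Finset.card_nsmul_le_sum
  intro P _
  exact Real.log_le_log two_pos (two_le_np P)

lemma piK_sub_le {x y : ℝ} (hy : 1 ≤ y) (hyx : y ≤ x) :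
    (piK K x - piK K y) * Real.log y ≤ theta K x := by
  classical
  have hsub : (finite_np_le K y).toFinset ⊆ (finite_np_le K x).toFinset := by
    intro P hP
    rw [Finite.mem_toFinset] at hP ⊢
    exact le_trans hP hyx
  have h1 : piK K x - piK K y = (((finite_np_le K x).toFinset \ (finite_np_le K y).toFinset).card : ℝ) := by
    unfold piK
    rw [Finset.card_sdiff_of_subset hsub, Nat.cast_sub (Finset.card_le_card hsub)]
  rw [h1, ← nsmul_eq_mul]
  refine le_trans (Finset.card_nsmul_le_sum _ (fun P => Real.log (np K P)) _ ?_)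
    (Finset.sum_le_sum_of_subset_of_nonneg Finset.sdiff_subset fun P _ _ => log_np_nonneg P)
  intro P hP
  rw [Finset.mem_sdiff, Finite.mem_toFinset, Finite.mem_toFinset] at hP
  have : ¬ np K P ≤ y := hP.2
  exact Real.log_le_log (by linarith) (by linarith)

lemma piK_asymp : Tendsto (fun x : ℝ => piK K x * Real.log x / x) atTop (𝓝 1) := by
  have hθ := theta_tendsto K
  rw [tendsto_order]
  constructor
  · intro a ha
    filter_upwards [hθ.eventually (lt_mem_nhds ha), eventually_gt_atTop 0] with x hx hx0
    refine lt_of_lt_of_le hx ?_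
    exact div_le_div_of_nonneg_right (theta_le_piK K) hx0.le
  · intro b hb
    set α : ℝ := 2 / (1 + b) with hα
    have hα0 : 0 < α := by positivity
    have hα1 : α < 1 := by rw [hα, div_lt_one (by linarith)]; linarith
    set D : ℝ := Module.finrank ℚ K * Real.log 4 / Real.log 2 with hD
    have hlx : Tendsto (fun x : ℝ => Real.log x / x ^ (1 - α)) atTop (𝓝 0) :=
      (isLittleO_log_rpow_atTop (by linarith)).tendsto_div_nhds_zero
    have hlim := (hθ.const_mul α⁻¹).add (hlx.const_mul D)
    rw [mul_one, mul_zero, add_zero] at hlim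
    have hαb : α⁻¹ < b := by rw [hα, inv_div]; linarith
    filter_upwards [hlim.eventually (gt_mem_nhds hαb), eventually_gt_atTop 1] with x hx hx1
    have hx0 : 0 < x := by linarith
    refine lt_of_le_of_lt ?_ hx
    have hl : 0 < Real.log x := Real.log_pos hx1
    have hy1 : 1 ≤ x ^ α := Real.one_le_rpow hx1.le hα0.le
    have hyx : x ^ α ≤ x := by
      conv_rhs => rw [← Real.rpow_one x]
      exact Real.rpow_le_rpow_of_exponent_le hx1.le hα1.le
    have h1 := piK_sub_le K hy1 hyx
    rw [Real.log_rpow hx0] at h1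
    have h2 := piK_le K (x := x ^ α) (by linarith)
    rw [← hD] at h2
    have h3 : (piK K x - piK K (x ^ α)) * Real.log x ≤ α⁻¹ * theta K x := by
      rw [← div_eq_inv_mul, le_div_iff₀ hα0]
      linarith
    have h4 : piK K x * Real.log x ≤ α⁻¹ * theta K x + D * x ^ α * Real.log x := by
      have := mul_le_mul_of_nonneg_right h2 hl.le
      linarith
    calc piK K x * Real.log x / x ≤ (α⁻¹ * theta K x + D * x ^ α * Real.log x) / x :=
          div_le_div_of_nonneg_right h4 hx0.le
      _ = _ := by
        rw [Real.rpow_sub hx0, Real.rpow_one]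
        have : 0 < x ^ α := Real.rpow_pos_of_pos hx0 _
        field_simp

lemma ncard_eq_piK (x : ℝ) : ({P : Ideal (NumberField.RingOfIntegers K) |
    P.IsPrime ∧ P ≠ ⊥ ∧ (Ideal.absNorm P : ℝ) ≤ x}.ncard : ℝ) = piK K x := by
  unfold piK
  rw [← Set.ncard_eq_toFinset_card _ (finite_np_le K x)]
  have hinj : Function.Injective (fun P : HeightOneSpectrum (𝓞 K) => P.asIdeal) :=
    fun P Q h => HeightOneSpectrum.ext h
  rw [← Set.ncard_image_of_injective _ hinj]
  congr 2
  ext I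
  constructor
  · rintro ⟨h1, h2, h3⟩
    exact ⟨⟨I, h1, h2⟩, h3, rfl⟩
  · rintro ⟨P, hP, rfl⟩
    exact ⟨P.isPrime, P.ne_bot, hP⟩

end PiK

end PIT

theorem prime_ideal_theorem (K : Type*) [Field K] [NumberField K] :
    Tendsto (fun x : ℝ =>
        ({P : Ideal (NumberField.RingOfIntegers K) |
            P.IsPrime ∧ P ≠ ⊥ ∧ (Ideal.absNorm P : ℝ) ≤ x}.ncard : ℝ) /
          ∫ t in (2:ℝ)..x, 1 / Real.log t)
      atTop (nhds 1) := by
  have h := (PIT.piK_asymp K).div PIT.li_asymp one_ne_zero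
  rw [div_one] at h
  refine h.congr' ?_
  filter_upwards [eventually_gt_atTop 1] with x hx
  have hl : Real.log x ≠ 0 := (Real.log_pos hx).ne'
  have h0 : x ≠ 0 := by linarith
  rw [PIT.ncard_eq_piK, Pi.div_apply, div_div_div_cancel_right₀ h0, mul_div_mul_right _ _ hl]
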